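/- Let λ < 0 and n ≥ 2 be an integer. Then there exist P > 0 and a P-periodic solution (x, y, θ): ℝ → ℝ³ of the generating system with m = n such that x(t) > 0 and y(t) > 0 for all t, the plane curve t ↦ (x(t), y(t)) is injective on [0, P) (the curve is a simple closed curve in the open first quadrant), the function t ↦ x(t)² + y(t)² is non-constant (the curve is not the circle solution), and the curve is symmetric across the diagonal: x(−t) = y(t) and y(−t) = x(t) for all t. -/

import Mathlib

open Real

namespace LamCurve

open Set Filter Topology
open scoped NNReal

/-- Global existence for a bounded Lipschitz autonomous vector field. -/
theorem exists_global_sol {E : Type*} [NormedAddCommGroup E] [NormedSpace ℝ E] [CompleteSpace E]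
    (V : E → E) (K L : ℝ≥0) (hK : LipschitzWith K V) (hL : ∀ x, ‖V x‖ ≤ L) (p : E) :
    ∃ γ : ℝ → E, γ 0 = p ∧ ∀ t, HasDerivAt γ (V (γ t)) t := by
  have h1 : ∀ N : ℕ, ∃ γ : ℝ → E, γ 0 = p ∧
      ∀ t ∈ Ioo (-((N : ℝ) + 1)) ((N : ℝ) + 1), HasDerivAt γ (V (γ t)) t := by
    intro N
    have hN : (0 : ℝ) ≤ N := N.cast_nonneg
    have hpl : IsPicardLindelof (fun _ => V) (tmin := -((N : ℝ) + 1)) (tmax := (N : ℝ) + 1)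
        ⟨0, by constructor <;> linarith⟩ p (L * (N + 1)) 0 L K := by
      refine ⟨fun t _ => hK.lipschitzOnWith, fun x _ => continuousOn_const, fun t _ x _ => hL x, ?_⟩
      simp
    obtain ⟨γ, h0, hγ⟩ := hpl.exists_eq_forall_mem_Icc_hasDerivWithinAt₀
    refine ⟨γ, h0, fun t ht => ?_⟩
    exact (hγ t (Ioo_subset_Icc_self ht)).hasDerivAt (Icc_mem_nhds ht.1 ht.2)
  choose γ h0 hγ using h1
  have huniq : ∀ N M : ℕ, N ≤ M → ∀ t ∈ Ioo (-((N : ℝ) + 1)) ((N : ℝ) + 1), γ N t = γ M t := by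
    intro N M hNM t ht
    have hN : (0 : ℝ) ≤ N := N.cast_nonneg
    have hc : (N : ℝ) ≤ M := by exact_mod_cast hNM
    refine ODE_solution_unique_of_mem_Ioo (v := fun _ => V) (s := fun _ => univ) (K := K)
      (t₀ := 0) (fun t _ => hK.lipschitzOnWith) (by constructor <;> linarith)
      (fun s hs => ⟨hγ N s hs, trivial⟩)
      (fun s hs => ⟨hγ M s ⟨by linarith [hs.1], by linarith [hs.2]⟩, trivial⟩)
      (by rw [h0, h0]) ht
  refine ⟨fun t => γ ⌈|t|⌉₊ t, by simp [h0], fun t => ?_⟩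
  have hmem : ∀ s : ℝ, s ∈ Ioo (-((⌈|s|⌉₊ : ℝ) + 1)) ((⌈|s|⌉₊ : ℝ) + 1) := by
    intro s
    have := Nat.le_ceil |s|
    rw [mem_Ioo, ← abs_lt]; linarith
  set N := ⌈|t|⌉₊ with hN
  have hev : (fun s => γ ⌈|s|⌉₊ s) =ᶠ[𝓝 t] γ (N + 1) := by
    filter_upwards [Ioo_mem_nhds (hmem t).1 (hmem t).2] with s hs
    apply huniq _ _ _ _ (hmem s)
    rw [Nat.ceil_le]
    push_cast
    rw [mem_Ioo, ← abs_lt] at hs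
    exact hs.le
  have hd := hγ (N + 1) t ⟨by push_cast; linarith [(hmem t).1], by push_cast; linarith [(hmem t).2]⟩
  have := hd.congr_of_eventuallyEq hev
  rw [← huniq N (N + 1) (Nat.le_succ _) t (hmem t)] at this
  exact this

/-- Lipschitz dependence on initial data, forward in time. -/
theorem dist_sol {E : Type*} [NormedAddCommGroup E] [NormedSpace ℝ E]
    {V : E → E} {K : ℝ≥0} (hK : LipschitzWith K V) {f g : ℝ → E}
    (hf : ∀ t, HasDerivAt f (V (f t)) t) (hg : ∀ t, HasDerivAt g (V (g t)) t) :
    ∀ t, 0 ≤ t → dist (f t) (g t) ≤ dist (f 0) (g 0) * exp (K * t) := by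
  intro t ht
  have := dist_le_of_trajectories_ODE (v := fun _ => V) (a := 0) (b := t) (fun _ => hK)
    (fun s _ => (hf s).continuousAt.continuousWithinAt) (fun s _ => (hf s).hasDerivWithinAt)
    (fun s _ => (hg s).continuousAt.continuousWithinAt) (fun s _ => (hg s).hasDerivWithinAt)
    le_rfl t ⟨ht, le_rfl⟩
  simpa using this

theorem sol_unique {E : Type*} [NormedAddCommGroup E] [NormedSpace ℝ E]
    {V : E → E} {K : ℝ≥0} (hK : LipschitzWith K V) {f g : ℝ → E}
    (hf : ∀ t, HasDerivAt f (V (f t)) t) (hg : ∀ t, HasDerivAt g (V (g t)) t)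
    (t₀ : ℝ) (h : f t₀ = g t₀) : f = g :=
  ODE_solution_unique_univ (v := fun _ => V) (s := fun _ => univ) (K := K) (t₀ := t₀)
    (fun _ => hK.lipschitzOnWith) (fun t => ⟨hf t, trivial⟩) (fun t => ⟨hg t, trivial⟩) h

theorem sol_unique_Icc {E : Type*} [NormedAddCommGroup E] [NormedSpace ℝ E]
    {V : E → E} {K : ℝ≥0} (hK : LipschitzWith K V) {f g : ℝ → E} {T : ℝ}
    (hf : ∀ t ∈ Icc 0 T, HasDerivAt f (V (f t)) t) (hg : ∀ t, HasDerivAt g (V (g t)) t)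
    (h : f 0 = g 0) : ∀ t ∈ Icc 0 T, f t = g t :=
  ODE_solution_unique (v := fun _ => V) (K := K) (fun _ => hK)
    (fun s hs => (hf s hs).continuousAt.continuousWithinAt)
    (fun s hs => (hf s (Ico_subset_Icc_self hs)).hasDerivWithinAt)
    (fun s _ => (hg s).continuousAt.continuousWithinAt) (fun s _ => (hg s).hasDerivWithinAt) h

/-- Monotonicity from the sign of the derivative. -/
theorem mono_le {f f' : ℝ → ℝ} {s e : ℝ} (hse : s ≤ e)
    (hf : ∀ t ∈ Icc s e, HasDerivAt f (f' t) t) (h : ∀ t ∈ Ioo s e, 0 ≤ f' t) : f s ≤ f e := by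
  rcases hse.eq_or_lt with rfl | hlt
  · exact le_rfl
  obtain ⟨c, hc, hc'⟩ := exists_hasDerivAt_eq_slope f f' hlt
    (fun t ht => (hf t ht).continuousAt.continuousWithinAt)
    (fun t ht => hf t (Ioo_subset_Icc_self ht))
  have := h c hc
  rw [hc', le_div_iff₀ (by linarith)] at this
  linarith

theorem mono_lt {f f' : ℝ → ℝ} {s e : ℝ} (hse : s < e)
    (hf : ∀ t ∈ Icc s e, HasDerivAt f (f' t) t) (h : ∀ t ∈ Ioo s e, 0 < f' t) : f s < f e := by
  obtain ⟨c, hc, hc'⟩ := exists_hasDerivAt_eq_slope f f' hse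
    (fun t ht => (hf t ht).continuousAt.continuousWithinAt)
    (fun t ht => hf t (Ioo_subset_Icc_self ht))
  have := h c hc
  rw [hc', lt_div_iff₀ (by linarith)] at this
  linarith

/-- If the derivative at `t` is positive, the function is below `f t` just to the left
of `t` and above just to the right. -/
theorem pos_deriv_left {f : ℝ → ℝ} {f' t : ℝ} (hf : HasDerivAt f f' t) (h : 0 < f') :
    ∀ᶠ s in 𝓝[<] t, f s < f t := by
  have h1 := (hasDerivAt_iff_tendsto_slope_left_right.1 hf).1
  have h2 := h1.eventually (lt_mem_nhds h)
  filter_upwards [h2, self_mem_nhdsWithin] with s hs hst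
  rw [slope_def_field] at hs
  have hst' : s < t := hst
  by_contra hcon
  have : (f s - f t) / (s - t) ≤ 0 := div_nonpos_of_nonneg_of_nonpos (by linarith) (by linarith)
  linarith

theorem pos_deriv_right {f : ℝ → ℝ} {f' t : ℝ} (hf : HasDerivAt f f' t) (h : 0 < f') :
    ∀ᶠ s in 𝓝[>] t, f t < f s := by
  have h1 := (hasDerivAt_iff_tendsto_slope_left_right.1 hf).2
  have h2 := h1.eventually (lt_mem_nhds h)
  filter_upwards [h2, self_mem_nhdsWithin] with s hs hst
  rw [slope_def_field] at hs
  have hst' : t < s := hst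
  by_contra hcon
  have : (f s - f t) / (s - t) ≤ 0 := div_nonpos_of_nonpos_of_nonneg (by linarith) (by linarith)
  linarith

/-- Barrier lemma. -/
theorem barrier {f f' : ℝ → ℝ} {s e c : ℝ}
    (hf : ∀ t ∈ Icc s e, HasDerivAt f (f' t) t) (hs : c ≤ f s)
    (h : ∀ t ∈ Icc s e, f t = c → 0 < f' t) : ∀ t ∈ Ioc s e, c < f t := by
  have hle : ∀ t ∈ Icc s e, c ≤ f t := by
    intro t ht
    have := image_le_of_deriv_right_lt_deriv_boundary' (f := fun t => -f t) (f' := fun t => -f' t)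
      (a := s) (b := e) (B := fun _ => -c) (B' := fun _ => 0)
      (fun t ht => (hf t ht).neg.continuousAt.continuousWithinAt)
      (fun t ht => (hf t (Ico_subset_Icc_self ht)).neg.hasDerivWithinAt) (by simpa using hs)
      continuousOn_const (fun t _ => hasDerivWithinAt_const _ _ _)
      (fun t ht hc => by
        have := h t (Ico_subset_Icc_self ht) (by linarith)
        linarith) ht
    linarith
  intro t ht
  have htI : t ∈ Icc s e := Ioc_subset_Icc_self ht
  rcases (hle t htI).eq_or_lt with heq | hlt
  · exfalso
    have h1 := pos_deriv_left (hf t htI) (h t htI heq.symm)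
    have h2 : ∀ᶠ x in 𝓝[<] t, x ∈ Ioo s t := Ioo_mem_nhdsLT ht.1
    obtain ⟨x, hx1, hx2⟩ := (h1.and h2).exists
    have := hle x ⟨hx2.1.le, hx2.2.le.trans ht.2⟩
    linarith
  · exact hlt

/-- The first zero of a function which is positive at `s` and non-positive at `e`. -/
theorem first_zero {f : ℝ → ℝ} {s e : ℝ} (hse : s ≤ e) (hf : ContinuousOn f (Icc s e))
    (hs : 0 < f s) (he : f e ≤ 0) : ∃ T ∈ Ioc s e, f T = 0 ∧ ∀ t ∈ Ico s T, 0 < f t := by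
  set S := {t ∈ Icc s e | f t ≤ 0} with hS
  have hSc : IsCompact S := by
    have : IsClosed S := hf.preimage_isClosed_of_isClosed isClosed_Icc isClosed_Iic
    exact isCompact_Icc.of_isClosed_subset this (fun t ht => ht.1)
  have hne : S.Nonempty := ⟨e, ⟨hse, le_rfl⟩, he⟩
  obtain ⟨T, hT, hmin⟩ := hSc.exists_isLeast hne
  have hsT : s < T := by
    rcases hT.1.1.eq_or_lt with h | h
    · rw [← h] at hT; linarith [hT.2]
    · exact h
  have hpos : ∀ t ∈ Ico s T, 0 < f t := by
    intro t ht
    by_contra hcon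
    have := hmin ⟨⟨ht.1, ht.2.le.trans hT.1.2⟩, not_lt.1 hcon⟩
    linarith [ht.2]
  refine ⟨T, ⟨hsT, hT.1.2⟩, le_antisymm hT.2 ?_, hpos⟩
  have hc : ContinuousWithinAt f (Ico s T) T :=
    (hf T hT.1).mono (fun t ht => ⟨ht.1, ht.2.le.trans hT.1.2⟩)
  have hnb : (𝓝[Ico s T] T).NeBot := by
    rw [← mem_closure_iff_nhdsWithin_neBot, closure_Ico hsT.ne]
    exact ⟨hsT.le, le_rfl⟩
  exact ge_of_tendsto hc (eventually_nhdsWithin_of_forall fun t ht => (hpos t ht).le)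

end LamCurve

namespace LamCurve

open Set Filter Topology
open scoped NNReal

/-- The radial coefficient. -/
noncomputable def hh (k : ℕ) (r : ℝ) : ℝ := r / 2 - (2 * ((k : ℝ) + 1) + 1) / r

/-- Right-hand side of the equation for the angle `ψ`. -/
noncomputable def pdot (k : ℕ) (μ r u p : ℝ) : ℝ :=
  cos p * hh k r + μ + 2 * ((k : ℝ) + 1) / r * tan (2 * u) * sin p

/-- An arc leaving the diagonal orthogonally at distance `r0` from the origin and returning to the
diagonal at time `T`, in polar coordinates. -/
structure Good (k : ℕ) (μ r0 T : ℝ) (r u p : ℝ → ℝ) : Prop where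
  Tpos : 0 < T
  r_zero : r 0 = r0
  u_zero : u 0 = 0
  p_zero : p 0 = 0
  u_T : u T = 0
  rpos : ∀ t ∈ Icc 0 T, 0 < r t
  upos : ∀ t ∈ Ioo 0 T, 0 < u t
  uhi : ∀ t ∈ Icc 0 T, u t < π / 4
  ppos : ∀ t ∈ Ioo 0 T, 0 < p t
  phi : ∀ t ∈ Ioo 0 T, p t < π
  dr : ∀ t ∈ Icc 0 T, HasDerivAt r (-sin (p t)) t
  du : ∀ t ∈ Icc 0 T, HasDerivAt u (cos (p t) / r t) t
  dp : ∀ t ∈ Icc 0 T, HasDerivAt p (pdot k μ (r t) (u t) (p t)) t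

theorem hh_mono {k : ℕ} {r s : ℝ} (hr : 0 < r) (hrs : r ≤ s) : hh k r ≤ hh k s := by
  unfold hh
  have : (2 * ((k : ℝ) + 1) + 1) / s ≤ (2 * ((k : ℝ) + 1) + 1) / r := by gcongr
  linarith

theorem tan2_nonneg {u : ℝ} (h0 : 0 ≤ u) (h1 : u < π / 4) : 0 ≤ tan (2 * u) :=
  tan_nonneg_of_nonneg_of_le_pi_div_two (by linarith) (by linarith)

namespace Good

variable {k : ℕ} {μ r0 T : ℝ} {r u p : ℝ → ℝ}

theorem u_nonneg (G : Good k μ r0 T r u p) : ∀ t ∈ Icc 0 T, 0 ≤ u t := by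
  intro t ht
  rcases ht.1.eq_or_lt with h | h
  · rw [← h, G.u_zero]
  rcases ht.2.eq_or_lt with h' | h'
  · rw [h', G.u_T]
  exact (G.upos t ⟨h, h'⟩).le

theorem p_mem (G : Good k μ r0 T r u p) : ∀ t ∈ Icc 0 T, p t ∈ Icc 0 π := by
  have hc : ContinuousOn p (closure (Ioo 0 T)) := by
    rw [closure_Ioo G.Tpos.ne]
    exact fun t ht => (G.dp t ht).continuousAt.continuousWithinAt
  have hm : MapsTo p (Ioo 0 T) (Icc 0 π) := fun t ht => ⟨(G.ppos t ht).le, (G.phi t ht).le⟩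
  have := hm.closure_of_continuousOn hc
  rw [closure_Ioo G.Tpos.ne, isClosed_Icc.closure_eq] at this
  exact this

theorem sin_nonneg (G : Good k μ r0 T r u p) : ∀ t ∈ Icc 0 T, 0 ≤ sin (p t) :=
  fun t ht => sin_nonneg_of_mem_Icc (G.p_mem t ht)

theorem tan_nonneg (G : Good k μ r0 T r u p) : ∀ t ∈ Icc 0 T, 0 ≤ tan (2 * u t) :=
  fun t ht => tan2_nonneg (G.u_nonneg t ht) (G.uhi t ht)

theorem extra_nonneg (G : Good k μ r0 T r u p) :
    ∀ t ∈ Icc 0 T, 0 ≤ 2 * ((k : ℝ) + 1) / r t * tan (2 * u t) * sin (p t) := by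
  intro t ht
  have h1 := G.sin_nonneg t ht
  have h2 := G.tan_nonneg t ht
  have h3 := G.rpos t ht
  positivity

theorem r_anti (G : Good k μ r0 T r u p) {s t : ℝ} (hs : 0 ≤ s) (hst : s ≤ t) (ht : t ≤ T) :
    r t ≤ r s := by
  have := mono_le (f := fun x => -r x) hst
    (fun x hx => (G.dr x ⟨hs.trans hx.1, hx.2.trans ht⟩).neg)
    (fun x hx => by simpa using G.sin_nonneg x ⟨hs.trans hx.1.le, hx.2.le.trans ht⟩)
  linarith

theorem r_strict (G : Good k μ r0 T r u p) {s t : ℝ} (hs : 0 ≤ s) (hst : s < t) (ht : t ≤ T) :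
    r t < r s := by
  have := mono_lt (f := fun x => -r x) hst
    (fun x hx => (G.dr x ⟨hs.trans hx.1, hx.2.trans ht⟩).neg)
    (fun x hx => by
      have hx' : x ∈ Ioo 0 T := ⟨hs.trans_lt hx.1, hx.2.trans_le ht⟩
      simpa using sin_pos_of_pos_of_lt_pi (G.ppos x hx') (G.phi x hx'))
  linarith

theorem r_lip (G : Good k μ r0 T r u p) {s t : ℝ} (hs : 0 ≤ s) (hst : s ≤ t) (ht : t ≤ T) :
    r s - (t - s) ≤ r t := by
  have := mono_le (f := fun x => r x + x) hst
    (fun x hx => (G.dr x ⟨hs.trans hx.1, hx.2.trans ht⟩).add (hasDerivAt_id x))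
    (fun x hx => by have := sin_le_one (p x); linarith)
  linarith

theorem r_le (G : Good k μ r0 T r u p) : ∀ t ∈ Icc 0 T, r t ≤ r0 := by
  intro t ht
  rw [← G.r_zero]
  exact G.r_anti le_rfl ht.1 ht.2

theorem after (G : Good k μ r0 T r u p) (hμ : 0 < μ) {s : ℝ} (hs : 0 ≤ s) (hp : π / 2 ≤ p s) :
    ∀ t ∈ Ioc s T, π / 2 < p t := by
  refine barrier (fun t ht => G.dp t ⟨hs.trans ht.1, ht.2⟩) hp (fun t ht h => ?_)
  have h1 := G.extra_nonneg t ⟨hs.trans ht.1, ht.2⟩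
  unfold pdot
  rw [h] at h1 ⊢
  rw [cos_pi_div_two]
  linarith

/-- The turning time. -/
theorem turn (G : Good k μ r0 T r u p) (hμ : 0 < μ) : ∃ m ∈ Ioo 0 T, p m = π / 2 ∧
    (∀ t ∈ Ico 0 m, p t < π / 2) ∧ (∀ t ∈ Ioc m T, π / 2 < p t) := by
  obtain ⟨m, hm, hm'⟩ := exists_hasDerivAt_eq_zero (f := u) (f' := fun t => cos (p t) / r t)
    G.Tpos (fun t ht => (G.du t ht).continuousAt.continuousWithinAt) (by rw [G.u_zero, G.u_T])
    (fun t ht => G.du t (Ioo_subset_Icc_self ht))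
  have hr := G.rpos m (Ioo_subset_Icc_self hm)
  have hcos : cos (p m) = 0 := by
    rcases div_eq_zero_iff.1 hm' with h | h
    · exact h
    · linarith
  have hpm : p m = π / 2 := by
    have h1 := G.ppos m hm
    have h2 := G.phi m hm
    apply injOn_cos ⟨h1.le, h2.le⟩ ⟨by linarith, by linarith⟩
    rw [hcos, cos_pi_div_two]
  refine ⟨m, hm, hpm, fun t ht => ?_, G.after hμ hm.1.le hpm.ge⟩
  by_contra hcon
  have := G.after hμ ht.1 (not_lt.1 hcon) m ⟨ht.2, hm.2.le⟩
  linarith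

/-- The basic monotone quantity. -/
theorem key (G : Good k μ r0 T r u p) : ∀ t ∈ Icc 0 T,
    μ * t + ((r t) ^ 2 / 2 - (2 * ((k : ℝ) + 1) + 1)) * u t ≤ p t := by
  intro t ht
  have := mono_le (f := fun x => p x - μ * x - ((r x) ^ 2 / 2 - (2 * ((k : ℝ) + 1) + 1)) * u x)
    (f' := fun x => 2 * ((k : ℝ) + 1) / r x * tan (2 * u x) * sin (p x) + r x * sin (p x) * u x)
    ht.1
    (fun x hx => by
      have hx' : x ∈ Icc 0 T := ⟨hx.1, hx.2.trans ht.2⟩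
      have hr := (G.rpos x hx').ne'
      have := ((G.dp x hx').sub ((hasDerivAt_id x).const_mul μ)).sub
        (((((G.dr x hx').pow 2).div_const 2).sub_const (2 * ((k : ℝ) + 1) + 1)).mul (G.du x hx'))
      refine this.congr_deriv ?_
      unfold pdot hh
      simp
      field_simp
      ring)
    (fun x hx => by
      have hx' : x ∈ Icc 0 T := ⟨hx.1.le, hx.2.le.trans ht.2⟩
      have h1 := G.extra_nonneg x hx'
      have h2 := G.sin_nonneg x hx'
      have h3 := G.u_nonneg x hx'
      have h4 := G.rpos x hx'
      positivity)
  simp only [G.u_zero, G.p_zero] at this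
  linarith

theorem T_le (G : Good k μ r0 T r u p) (hμ : 0 < μ) : T ≤ π / μ := by
  have h := G.key T ⟨G.Tpos.le, le_rfl⟩
  rw [G.u_T] at h
  have h2 := (G.p_mem T ⟨G.Tpos.le, le_rfl⟩).2
  rw [le_div_iff₀ hμ]
  linarith

theorem cos2u_pos (G : Good k μ r0 T r u p) : ∀ t ∈ Icc 0 T, 0 < cos (2 * u t) := by
  intro t ht
  have h1 := G.u_nonneg t ht
  have h2 := G.uhi t ht
  exact cos_pos_of_mem_Ioo ⟨by linarith [pi_pos], by linarith⟩

/-- Derivative of the flux. -/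
theorem dF (G : Good k μ r0 T r u p) : ∀ t ∈ Icc 0 T,
    HasDerivAt (fun t => sin (p t) * cos (2 * u t) ^ (k + 1))
      (cos (p t) * cos (2 * u t) ^ (k + 1) * (hh k (r t) * cos (p t) + μ)) t := by
  intro t ht
  have hr := (G.rpos t ht).ne'
  have hc := (G.cos2u_pos t ht).ne'
  have := (G.dp t ht).sin.mul (((G.du t ht).const_mul 2).cos.pow (k + 1))
  refine this.congr_deriv ?_
  unfold pdot hh
  rw [tan_eq_sin_div_cos]
  simp
  field_simp
  ring

/-- `u` increases before the turning time. -/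
theorem u_le_turn (G : Good k μ r0 T r u p) {m : ℝ} (hm : m ∈ Ioo 0 T)
    (h1 : ∀ t ∈ Ico 0 m, p t < π / 2) : ∀ s t, 0 ≤ s → s ≤ t → t ≤ m → u s ≤ u t := by
  intro s t hs hst htm
  refine mono_le hst (fun x hx => G.du x ⟨hs.trans hx.1, hx.2.trans (htm.trans hm.2.le)⟩)
    (fun x hx => ?_)
  have hx' : x ∈ Icc 0 T := ⟨hs.trans hx.1.le, hx.2.le.trans (htm.trans hm.2.le)⟩
  have h2 := h1 x ⟨hx'.1, hx.2.trans_le htm⟩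
  have h3 := G.rpos x hx'
  have h4 := G.p_mem x hx'
  have : 0 ≤ cos (p x) := cos_nonneg_of_mem_Icc ⟨by linarith [h4.1, pi_pos], h2.le⟩
  positivity

theorem u_ge_turn (G : Good k μ r0 T r u p) {m : ℝ} (hm : m ∈ Ioo 0 T)
    (h1 : ∀ t ∈ Ioc m T, π / 2 < p t) : ∀ s t, m ≤ s → s ≤ t → t ≤ T → u t ≤ u s := by
  intro s t hs hst htm
  have := mono_le (f := fun x => - u x) hst
    (fun x hx => (G.du x ⟨hm.1.le.trans (hs.trans hx.1), hx.2.trans htm⟩).neg)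
    (fun x hx => ?_)
  · linarith
  have hx' : x ∈ Icc 0 T := ⟨hm.1.le.trans (hs.trans hx.1.le), hx.2.le.trans htm⟩
  have h2 := h1 x ⟨hs.trans_lt hx.1, hx'.2⟩
  have h3 := G.rpos x hx'
  have h4 := G.p_mem x hx'
  have : cos (p x) ≤ 0 := cos_nonpos_of_pi_div_two_le_of_le h2.le (by linarith [h4.2, pi_pos])
  have := div_nonpos_of_nonpos_of_nonneg this h3.le
  linarith

theorem u_le_max (G : Good k μ r0 T r u p) {m : ℝ} (hm : m ∈ Ioo 0 T)
    (h1 : ∀ t ∈ Ico 0 m, p t < π / 2) (h2 : ∀ t ∈ Ioc m T, π / 2 < p t) :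
    ∀ t ∈ Icc 0 T, u t ≤ u m := by
  intro t ht
  rcases le_total t m with h | h
  · exact G.u_le_turn hm h1 t m ht.1 h le_rfl
  · exact G.u_ge_turn hm h2 m t le_rfl h ht.2

end Good

end LamCurve

namespace LamCurve

open Set Filter Topology
open scoped NNReal

/-- The constant `2a+1`. -/
noncomputable def cc (k : ℕ) : ℝ := 2 * ((k : ℝ) + 1) + 1

theorem cc_pos (k : ℕ) : 0 < cc k := by unfold cc; positivity

theorem hh_eq (k : ℕ) (r : ℝ) : hh k r = r / 2 - cc k / r := rfl

theorem hh_nonpos {k : ℕ} {r : ℝ} (hr : 0 < r) (h : r ^ 2 ≤ 2 * cc k) : hh k r ≤ 0 := by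
  rw [hh_eq, sub_nonpos, le_div_iff₀ hr]
  nlinarith

theorem hh_nonneg {k : ℕ} {r : ℝ} (hr : 0 < r) (h : 2 * cc k ≤ r ^ 2) : 0 ≤ hh k r := by
  rw [hh_eq, sub_nonneg, div_le_iff₀ hr]
  nlinarith

/-- rate constant -/
noncomputable def c1 (k : ℕ) (μ : ℝ) : ℝ := min (cc k / 2) (μ * √(cc k))

theorem c1_pos (k : ℕ) {μ : ℝ} (hμ : 0 < μ) : 0 < c1 k μ := by
  have := cc_pos k
  unfold c1
  positivity

theorem c1_le {k : ℕ} {μ r : ℝ} (hμ : 0 < μ) (hr : 0 < r) (h : r ^ 2 ≤ 2 * cc k) :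
    c1 k μ ≤ cc k - r ^ 2 / 2 + μ * r := by
  rcases le_total (r ^ 2) (cc k) with h1 | h1
  · refine (min_le_left _ _).trans ?_
    have : 0 < μ * r := by positivity
    linarith
  · refine (min_le_right _ _).trans ?_
    have h2 : √(cc k) ≤ r := by
      rw [Real.sqrt_le_left hr.le]; exact h1
    have := mul_le_mul_of_nonneg_left h2 hμ.le
    linarith

noncomputable def qq (k : ℕ) : ℝ := cos (π / 4) ^ (k + 1)

theorem qq_pos (k : ℕ) : 0 < qq k := by
  unfold qq
  rw [cos_pi_div_four]
  positivity

/-- flux lower bound constant -/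
noncomputable def c0 (k : ℕ) (μ : ℝ) : ℝ :=
  qq k * min 1 (min (c1 k μ / 4) (μ * √(2 * cc k) * (π / 8)))

theorem c0_pos (k : ℕ) {μ : ℝ} (hμ : 0 < μ) : 0 < c0 k μ := by
  have h1 := cc_pos k
  have h2 := c1_pos k hμ
  have h3 := qq_pos k
  unfold c0
  positivity

namespace Good

variable {k : ℕ} {μ r0 T : ℝ} {r u p : ℝ → ℝ}

/-- After turning, with `r` small, `ψ + c₁ u` increases. -/
theorem grow (G : Good k μ r0 T r u p) (hμ : 0 < μ) {m : ℝ} (hm : m ∈ Ioo 0 T)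
    (h2 : ∀ t ∈ Ioc m T, π / 2 < p t) {s t : ℝ} (hs : m ≤ s) (hst : s ≤ t) (ht : t ≤ T)
    (hr : r s ^ 2 ≤ 2 * cc k) : p s + c1 k μ * u s ≤ p t + c1 k μ * u t := by
  refine mono_le (f := fun x => p x + c1 k μ * u x) hst (fun x hx =>
    (G.dp x ⟨hm.1.le.trans (hs.trans hx.1), hx.2.trans ht⟩).add
      ((G.du x ⟨hm.1.le.trans (hs.trans hx.1), hx.2.trans ht⟩).const_mul (c1 k μ))) (fun x hx => ?_)
  have hx' : x ∈ Icc 0 T := ⟨hm.1.le.trans (hs.trans hx.1.le), hx.2.le.trans ht⟩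
  have h3 := G.rpos x hx'
  have h4 := h2 x ⟨hs.trans_lt hx.1, hx'.2⟩
  have h5 := G.p_mem x hx'
  have hcos : cos (p x) ≤ 0 :=
    cos_nonpos_of_pi_div_two_le_of_le h4.le (by linarith [h5.2, pi_pos])
  have hcos1 := neg_one_le_cos (p x)
  have hrx : r x ≤ r s := G.r_anti (hm.1.le.trans hs) hx.1.le hx'.2
  have hr2 : r x ^ 2 ≤ 2 * cc k := le_trans (by gcongr) hr
  have h6 := c1_le hμ h3 hr2
  have h7 := G.extra_nonneg x hx'
  unfold pdot
  rw [hh_eq]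
  have h8 : 0 ≤ -cos (p x) / r x * (cc k - r x ^ 2 / 2 + μ * r x - c1 k μ) :=
    mul_nonneg (div_nonneg (by linarith) h3.le) (by linarith)
  have h9 : -cos (p x) / r x * (cc k - r x ^ 2 / 2 + μ * r x - c1 k μ) =
    cos (p x) * (r x / 2 - cc k / r x) - μ * cos (p x) + c1 k μ * (cos (p x) / r x) := by
    field_simp
    ring
  nlinarith

/-- After turning, with `r` small, `ψ - μ t` increases. -/
theorem grow2 (G : Good k μ r0 T r u p) {m : ℝ} (hm : m ∈ Ioo 0 T)
    (h2 : ∀ t ∈ Ioc m T, π / 2 < p t) {s t : ℝ} (hs : m ≤ s) (hst : s ≤ t) (ht : t ≤ T)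
    (hr : r s ^ 2 ≤ 2 * cc k) : p s + μ * (t - s) ≤ p t := by
  have := mono_le (f := fun x => p x - μ * x) hst (fun x hx =>
    (G.dp x ⟨hm.1.le.trans (hs.trans hx.1), hx.2.trans ht⟩).sub
      ((hasDerivAt_id x).const_mul μ)) (fun x hx => ?_)
  · linarith
  have hx' : x ∈ Icc 0 T := ⟨hm.1.le.trans (hs.trans hx.1.le), hx.2.le.trans ht⟩
  have h3 := G.rpos x hx'
  have h4 := h2 x ⟨hs.trans_lt hx.1, hx'.2⟩
  have h5 := G.p_mem x hx'
  have hcos : cos (p x) ≤ 0 :=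
    cos_nonpos_of_pi_div_two_le_of_le h4.le (by linarith [h5.2, pi_pos])
  have hrx : r x ≤ r s := G.r_anti (hm.1.le.trans hs) hx.1.le hx'.2
  have hr2 : r x ^ 2 ≤ 2 * cc k := le_trans (by gcongr) hr
  have h6 := mul_nonneg_of_nonpos_of_nonpos hcos (hh_nonpos h3 hr2)
  have h7 := G.extra_nonneg x hx'
  unfold pdot
  linarith

theorem qq_le {u : ℝ} (h0 : 0 ≤ u) (h1 : u ≤ π / 8) : qq k ≤ cos (2 * u) ^ (k + 1) := by
  unfold qq
  have : cos (π / 4) ≤ cos (2 * u) :=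
    cos_le_cos_of_nonneg_of_le_pi (by linarith) (by linarith [pi_pos]) (by linarith)
  have h2 : 0 ≤ cos (π / 4) := by rw [cos_pi_div_four]; positivity
  gcongr

theorem flux1 (G : Good k μ r0 T r u p) (hμ : 0 < μ) {m : ℝ} (hm : m ∈ Ioo 0 T)
    (hpm : p m = π / 2)
    (h2 : ∀ t ∈ Ioc m T, π / 2 < p t) (hr : r m ^ 2 ≤ 2 * cc k) :
    c0 k μ ≤ cos (2 * u m) ^ (k + 1) := by
  have hmI := Ioo_subset_Icc_self hm
  have hq := qq_pos k
  have hc1 := c1_pos k hμ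
  by_contra hcon
  rw [not_le] at hcon
  have hum : π / 8 < u m := by
    by_contra h
    have h3 := qq_le (k := k) (G.u_nonneg m hmI) (not_lt.1 h)
    have : c0 k μ ≤ qq k * 1 := by
      unfold c0; gcongr; exact min_le_left _ _
    linarith
  obtain ⟨t1, ht1, hut1⟩ : ∃ t1 ∈ Icc m T, u t1 = π / 8 := by
    have := intermediate_value_Icc' (f := u) hm.2.le
      (fun t ht => (G.du t ⟨hm.1.le.trans ht.1, ht.2⟩).continuousAt.continuousWithinAt)
    exact this ⟨by rw [G.u_T]; positivity, hum.le⟩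
  have ht1' : t1 ∈ Icc 0 T := ⟨hm.1.le.trans ht1.1, ht1.2⟩
  have hmt1 : m < t1 := by
    rcases ht1.1.eq_or_lt with h | h
    · rw [← h] at hut1; linarith
    · exact h
  -- flux decreases
  have hF := mono_le (f := fun t => -(sin (p t) * cos (2 * u t) ^ (k + 1))) ht1.1
    (fun x hx => (G.dF x ⟨hm.1.le.trans hx.1, hx.2.trans ht1.2⟩).neg) (fun x hx => by
      have hx' : x ∈ Icc 0 T := ⟨hm.1.le.trans hx.1.le, hx.2.le.trans ht1.2⟩
      have h3 := G.rpos x hx'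
      have h4 := h2 x ⟨hx.1, hx'.2⟩
      have h5 := G.p_mem x hx'
      have hcos : cos (p x) ≤ 0 :=
        cos_nonpos_of_pi_div_two_le_of_le h4.le (by linarith [h5.2, pi_pos])
      have hrx : r x ≤ r m := G.r_anti hm.1.le hx.1.le hx'.2
      have hr2 : r x ^ 2 ≤ 2 * cc k := le_trans (by gcongr) hr
      have h6 := mul_nonneg_of_nonpos_of_nonpos (hh_nonpos h3 hr2) hcos
      have h7 := (pow_pos (G.cos2u_pos x hx') (k + 1)).le
      have h8 := mul_nonneg (mul_nonneg (neg_nonneg.2 hcos) h7)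
        (by linarith : 0 ≤ hh k (r x) * cos (p x) + μ)
      linarith)
  simp only [hpm, sin_pi_div_two, one_mul, hut1] at hF
  rw [show 2 * (π / 8) = π / 4 by ring, ← qq] at hF
  have hg := G.grow hμ hm h2 ht1.1 ht1.2 le_rfl
    (le_trans (by have := G.r_anti hm.1.le ht1.1 ht1.2; have := G.rpos t1 ht1'; gcongr) hr)
  rw [G.u_T, hut1] at hg
  have hpT := (G.p_mem T ⟨G.Tpos.le, le_rfl⟩).2
  have hp1 := h2 t1 ⟨hmt1, ht1.2⟩
  have hp1' := (G.p_mem t1 ht1').2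
  have hj := mul_le_sin (x := π - p t1) (by linarith) (by linarith)
  rw [sin_pi_sub] at hj
  have hc0 : c0 k μ ≤ qq k * (c1 k μ / 4) := by
    unfold c0; gcongr; exact (min_le_right _ _).trans (min_le_left _ _)
  have h9 : sin (p t1) * qq k < qq k * (c1 k μ / 4) := by linarith
  have h10 : sin (p t1) < c1 k μ / 4 := by
    rw [mul_comm] at h9; exact lt_of_mul_lt_mul_left h9 hq.le
  have h11 : 2 / π * (c1 k μ * (π / 8)) ≤ 2 / π * (π - p t1) := by
    gcongr; linarith
  have h12 : 2 / π * (c1 k μ * (π / 8)) = c1 k μ / 4 := by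
    have := pi_pos.ne'
    field_simp; norm_num
  linarith

theorem cos_nonneg_before (G : Good k μ r0 T r u p) {m : ℝ} (hm : m ∈ Ioo 0 T)
    (h1 : ∀ t ∈ Ico 0 m, p t < π / 2) : ∀ t ∈ Ico 0 m, 0 ≤ cos (p t) := fun t ht =>
  cos_nonneg_of_mem_Icc
    ⟨by linarith [(G.p_mem t ⟨ht.1, ht.2.le.trans hm.2.le⟩).1, pi_pos], (h1 t ht).le⟩

theorem flux2 (G : Good k μ r0 T r u p) (hμ : 0 < μ) {m : ℝ} (hm : m ∈ Ioo 0 T)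
    (hpm : p m = π / 2) (h1 : ∀ t ∈ Ico 0 m, p t < π / 2) (hr : 2 * cc k ≤ r m ^ 2) :
    c0 k μ ≤ cos (2 * u m) ^ (k + 1) := by
  have hmI := Ioo_subset_Icc_self hm
  have hq := qq_pos k
  have hcp := cc_pos k
  rcases le_or_gt (u m) (π / 8) with hum | hum
  · have h3 := qq_le (k := k) (G.u_nonneg m hmI) hum
    have : c0 k μ ≤ qq k * 1 := by
      unfold c0; gcongr; exact min_le_left _ _
    linarith
  obtain ⟨s, hs, hus⟩ : ∃ t1 ∈ Icc 0 m, u t1 = π / 8 := by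
    have := intermediate_value_Icc (f := u) hm.1.le
      (fun t ht => (G.du t ⟨ht.1, ht.2.trans hm.2.le⟩).continuousAt.continuousWithinAt)
    exact this ⟨by rw [G.u_zero]; positivity, hum.le⟩
  have hb : ∀ x ∈ Ico 0 m, 0 ≤ cos (p x) ∧ 0 ≤ hh k (r x) ∧ √(2 * cc k) ≤ r x := by
    intro x hx
    have hx' : x ∈ Icc 0 T := ⟨hx.1, hx.2.le.trans hm.2.le⟩
    have h3 := G.rpos x hx'
    have h4 : r m ≤ r x := G.r_anti hx.1 hx.2.le hm.2.le
    have h5 : r m ^ 2 ≤ r x ^ 2 := by have := G.rpos m hmI; gcongr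
    refine ⟨G.cos_nonneg_before hm h1 x hx, hh_nonneg h3 (hr.trans h5), ?_⟩
    rw [Real.sqrt_le_left h3.le]
    exact hr.trans h5
  have hFm := mono_le (f := fun t => sin (p t) * cos (2 * u t) ^ (k + 1)) hs.2
    (fun x hx => G.dF x ⟨hs.1.trans hx.1, hx.2.trans hm.2.le⟩) (fun x hx => by
      have hx' : x ∈ Icc 0 T := ⟨hs.1.trans hx.1.le, hx.2.le.trans hm.2.le⟩
      obtain ⟨h3, h4, h5⟩ := hb x ⟨hx'.1, hx.2⟩
      have h7 := G.cos2u_pos x hx'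
      positivity)
  have hFs := mono_le (f := fun t => sin (p t) * cos (2 * u t) ^ (k + 1)
      - μ * √(2 * cc k) * qq k * u t) hs.1
    (fun x hx => (G.dF x ⟨hx.1, hx.2.trans (hs.2.trans hm.2.le)⟩).sub
      ((G.du x ⟨hx.1, hx.2.trans (hs.2.trans hm.2.le)⟩).const_mul _)) (fun x hx => by
      have hx' : x ∈ Icc 0 T := ⟨hx.1.le, hx.2.le.trans (hs.2.trans hm.2.le)⟩
      obtain ⟨h3, h4, h5⟩ := hb x ⟨hx'.1, hx.2.trans_le hs.2⟩
      have h6 := G.rpos x hx'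
      have h7 : qq k ≤ cos (2 * u x) ^ (k + 1) := by
        apply qq_le (G.u_nonneg x hx')
        rw [← hus]
        exact G.u_le_turn hm h1 x s hx.1.le hx.2.le hs.2
      have h8 : √(2 * cc k) * (cos (p x) / r x) ≤ cos (p x) := by
        rw [mul_div_assoc', div_le_iff₀ h6]
        nlinarith
      have h9 : qq k * μ ≤ cos (2 * u x) ^ (k + 1) * (hh k (r x) * cos (p x) + μ) := by
        have := mul_nonneg h4 h3
        exact mul_le_mul h7 (by linarith) hμ.le (hq.le.trans h7)
      have h10 := mul_le_mul_of_nonneg_left h9 h3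
      have h11 := mul_le_mul_of_nonneg_left h8 (mul_pos hμ hq).le
      linarith)
  simp only [hpm, sin_pi_div_two, one_mul, G.p_zero, G.u_zero, sin_zero, hus] at hFm hFs
  have hc0 : c0 k μ ≤ qq k * (μ * √(2 * cc k) * (π / 8)) := by
    unfold c0; gcongr; exact (min_le_right _ _).trans (min_le_right _ _)
  linarith

theorem flux (G : Good k μ r0 T r u p) (hμ : 0 < μ) {m : ℝ} (hm : m ∈ Ioo 0 T)
    (hpm : p m = π / 2) (h1 : ∀ t ∈ Ico 0 m, p t < π / 2)
    (h2 : ∀ t ∈ Ioc m T, π / 2 < p t) :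
    c0 k μ ≤ cos (2 * u m) ^ (k + 1) := by
  rcases le_total (r m ^ 2) (2 * cc k) with h | h
  · exact G.flux1 hμ hm hpm h2 h
  · exact G.flux2 hμ hm hpm h1 h

theorem cos_ge (G : Good k μ r0 T r u p) (hμ : 0 < μ) : ∀ t ∈ Icc 0 T,
    c0 k μ ≤ cos (2 * u t) := by
  obtain ⟨m, hm, hpm, h1, h2⟩ := G.turn hμ
  have h3 := G.flux hμ hm hpm h1 h2
  intro t ht
  have h4 := G.u_le_max hm h1 h2 t ht
  have h5 := G.u_nonneg t ht
  have h6 := G.uhi m (Ioo_subset_Icc_self hm)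
  have h7 : cos (2 * u m) ≤ cos (2 * u t) :=
    cos_le_cos_of_nonneg_of_le_pi (by linarith) (by linarith [pi_pos]) (by linarith)
  have h8 : cos (2 * u m) ^ (k + 1) ≤ cos (2 * u m) := by
    apply pow_le_of_le_one (G.cos2u_pos m (Ioo_subset_Icc_self hm)).le (cos_le_one _) (by simp)
  linarith

/-- Orbits starting close to the circle are not good. -/
theorem near_circle (G : Good k μ r0 T r u p) (hμ : 0 < μ) (hr0 : r0 ^ 2 ≤ 2 * cc k)
    (hδ : 0 ≤ hh k r0 + μ) :
    μ * c0 k μ + (hh k r0 + μ) ≤ (hh k r0 + μ) * exp (μ * √(2 * cc k) * (π / 4)) := by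
  obtain ⟨m, hm, hpm, h1, h2⟩ := G.turn hμ
  have h3 := G.flux hμ hm hpm h1 h2
  set δ := hh k r0 + μ with hδd
  set b := μ * √(2 * cc k) with hb
  have hb0 : 0 ≤ b := by positivity
  have hmain := mono_le (f := fun t => -((μ * (sin (p t) * cos (2 * u t) ^ (k + 1)) + δ) *
      exp (-(b * u t)))) hm.1.le
    (fun x hx => (((((G.dF x ⟨hx.1, hx.2.trans hm.2.le⟩).const_mul μ).add_const δ).mul
      (((G.du x ⟨hx.1, hx.2.trans hm.2.le⟩).const_mul b).neg).exp)).neg) (fun x hx => by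
      have hx' : x ∈ Icc 0 T := ⟨hx.1.le, hx.2.le.trans hm.2.le⟩
      have h4 := G.cos_nonneg_before hm h1 x ⟨hx.1.le, hx.2⟩
      have h5 := G.sin_nonneg x hx'
      have h6 := G.rpos x hx'
      have h7 := G.cos2u_pos x hx'
      have h8 := G.r_le x hx'
      set w := cos (2 * u x) ^ (k + 1) with hw
      have hw0 : 0 ≤ w := by positivity
      have hw1 : w ≤ 1 := pow_le_one₀ h7.le (cos_le_one _)
      have h9 : hh k (r x) ≤ δ - μ := by have := hh_mono (k := k) h6 h8; linarith
      have h10 : 1 ≤ cos (p x) + sin (p x) := by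
        nlinarith [sin_sq_add_cos_sq (p x), mul_nonneg h4 h5]
      have h11 : hh k (r x) * cos (p x) + μ ≤ μ * sin (p x) + δ := by
        have e1 := mul_le_mul_of_nonneg_right h9 h4
        have e2 := mul_le_mul_of_nonneg_left h10 hμ.le
        have e3 := mul_le_mul_of_nonneg_left (cos_le_one (p x)) hδ
        linarith
      have h12 : w * (hh k (r x) * cos (p x) + μ) ≤ μ * (sin (p x) * w) + δ := by
        have e1 := mul_le_mul_of_nonneg_left h11 hw0
        have e2 := mul_le_mul_of_nonneg_left hw1 hδ
        linarith
      have h13 : r x ≤ √(2 * cc k) := by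
        apply Real.le_sqrt_of_sq_le
        refine le_trans ?_ hr0
        gcongr
      have h14 : cos (p x) ≤ √(2 * cc k) * (cos (p x) / r x) := by
        rw [mul_div_assoc', le_div_iff₀ h6]
        nlinarith
      have hP : 0 ≤ μ * (sin (p x) * w) + δ := by positivity
      have h15 := mul_le_mul_of_nonneg_left h12 (mul_nonneg hμ.le h4)
      have h16 := mul_le_mul_of_nonneg_right h14 (mul_nonneg hμ.le hP)
      have hE := (exp_pos (-(b * u x))).le
      have h17 : 0 ≤ (b * (cos (p x) / r x) * (μ * (sin (p x) * w) + δ)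
        - μ * (cos (p x) * w * (hh k (r x) * cos (p x) + μ))) * exp (-(b * u x)) := by
        apply mul_nonneg _ hE
        rw [hb]
        linarith
      simp only [Pi.neg_apply]
      linarith)
  simp only [hpm, G.p_zero, G.u_zero, sin_pi_div_two, one_mul, sin_zero, zero_mul, mul_zero,
    neg_zero, exp_zero, zero_add, mul_one] at hmain
  have h4 : exp (-(b * u m)) * exp (b * u m) = 1 := by rw [← exp_add]; simp
  have h5 := exp_pos (b * u m)
  have h6 : (μ * cos (2 * u m) ^ (k + 1) + δ) ≤ δ * exp (b * u m) := by
    have := mul_le_mul_of_nonneg_right (neg_le_neg hmain) h5.le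
    rw [neg_neg, neg_neg, mul_assoc, h4] at this
    linarith
  have h7 : exp (b * u m) ≤ exp (b * (π / 4)) := by
    have := G.uhi m (Ioo_subset_Icc_self hm)
    gcongr
  have h8 := mul_le_mul_of_nonneg_left h7 hδ
  have h9 := mul_le_mul_of_nonneg_left h3 hμ.le
  linarith

end Good

end LamCurve

namespace LamCurve

open Set Filter Topology
open scoped NNReal

/-- Uniform lower bounds for the radius and the return time. -/
theorem lower_bounds (k : ℕ) {μ ra L : ℝ} (hμ : 0 < μ) (hra : 0 < ra) (hL : ra ≤ L) :
    ∃ ρ > 0, ∃ t0 > 0, ∀ r0 ∈ Icc ra L, ∀ T r u p, Good k μ r0 T r u p →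
      t0 ≤ T ∧ ∀ t ∈ Icc 0 T, ρ ≤ r t := by
  have hc0 := c0_pos k hμ
  have hcc := cc_pos k
  have hLpos : 0 < L := hra.trans_le hL
  have hpi := pi_pos
  set B : ℝ := L / 2 + cc k / (ra / 2) + μ + 2 * ((k : ℝ) + 1) / (ra / 2) * (1 / c0 k μ) with hB
  have hBpos : 0 < B := by positivity
  set t0 : ℝ := min (ra / 2) (π / 3 / B) with ht0
  have ht0pos : 0 < t0 := by positivity
  set u0 : ℝ := 1 / 2 / L * t0 with hu0
  have hu0pos : 0 < u0 := by positivity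
  set e : ℝ := 4 * ((k : ℝ) + 1) * u0 with he
  have hepos : 0 < e := by positivity
  set ρ1 : ℝ := exp (log (ra / 2) - (π / 2 + cc k * (π / 4)) / e) with hρ1
  set ρ2 : ℝ := min ρ1 (√(2 * cc k)) with hρ2
  have hρ2pos : 0 < ρ2 := by rw [hρ2, hρ1]; positivity
  set q1 : ℝ := sin (min (μ * (ρ2 / 2)) (π / 2)) with hq1
  have hq1pos : 0 < q1 := by
    apply sin_pos_of_pos_of_lt_pi
    · positivity
    · exact (min_le_right _ _).trans_lt (by linarith)
  set ρ3 : ℝ := exp (log (ρ2 / 2) - π / 4 / q1) with hρ3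
  refine ⟨min ρ3 (ρ2 / 2), by positivity, t0, ht0pos, ?_⟩
  intro r0 hr0 T r u p G
  obtain ⟨m, hm, hpm, h1, h2⟩ := G.turn hμ
  have hmI := Ioo_subset_Icc_self hm
  -- initial phase
  have hrhalf : ∀ t ∈ Icc 0 T, t ≤ t0 → ra / 2 ≤ r t := by
    intro t ht htt
    have e1 := G.r_lip le_rfl ht.1 ht.2
    rw [G.r_zero] at e1
    have e2 : t0 ≤ ra / 2 := min_le_left _ _
    linarith [hr0.1]
  have hpB : ∀ t ∈ Icc 0 T, t ≤ t0 → p t ≤ B * t := by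
    intro t ht htt
    have := mono_le (f := fun x => B * x - p x) ht.1
      (fun x hx => ((hasDerivAt_id x).const_mul B).sub (G.dp x ⟨hx.1, hx.2.trans ht.2⟩))
      (fun x hx => ?_)
    · simp only [G.p_zero, mul_zero, sub_zero] at this
      linarith
    have hx' : x ∈ Icc 0 T := ⟨hx.1.le, hx.2.le.trans ht.2⟩
    have e1 := hrhalf x hx' (hx.2.le.trans htt)
    have e2 := G.r_le x hx'
    have e3 := G.rpos x hx'
    have e4 := G.cos_ge hμ x hx'
    have e5 := G.tan_nonneg x hx'
    have e6 := G.sin_nonneg x hx'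
    have e7 : tan (2 * u x) ≤ 1 / c0 k μ := by
      rw [tan_eq_sin_div_cos]
      have := sin_le_one (2 * u x)
      have e8 : 0 < cos (2 * u x) := hc0.trans_le e4
      calc sin (2 * u x) / cos (2 * u x) ≤ 1 / cos (2 * u x) := by gcongr
        _ ≤ 1 / c0 k μ := by gcongr
    have e8 : 2 * ((k : ℝ) + 1) / r x * tan (2 * u x) * sin (p x) ≤
        2 * ((k : ℝ) + 1) / (ra / 2) * (1 / c0 k μ) * 1 := by
      have := sin_le_one (p x)
      gcongr
    have e9 : cos (p x) * hh k (r x) ≤ L / 2 + cc k / (ra / 2) := by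
      have e10 : cc k / r x ≤ cc k / (ra / 2) := by gcongr
      have e11 : 0 < cc k / r x := by positivity
      have e12 := neg_one_le_cos (p x)
      have e13 := cos_le_one (p x)
      have e14 : |hh k (r x)| ≤ L / 2 + cc k / (ra / 2) := by
        rw [hh_eq, abs_le]
        constructor <;> linarith [hr0.2]
      calc cos (p x) * hh k (r x) ≤ |cos (p x) * hh k (r x)| := le_abs_self _
        _ = |cos (p x)| * |hh k (r x)| := abs_mul _ _
        _ ≤ 1 * |hh k (r x)| := by gcongr; exact abs_cos_le_one _
        _ ≤ _ := by linarith
    simp only [pdot]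
    linarith
  have hBt0 : B * t0 ≤ π / 3 := by
    have : t0 ≤ π / 3 / B := min_le_right _ _
    rw [le_div_iff₀ hBpos] at this
    linarith
  have ht0m : t0 < m := by
    by_contra hcon
    have := hpB m hmI (not_lt.1 hcon)
    have := mul_le_mul_of_nonneg_left (not_lt.1 hcon) hBpos.le
    linarith
  have ht0I : t0 ∈ Icc 0 T := ⟨ht0pos.le, ht0m.le.trans hm.2.le⟩
  have hut0 : u0 ≤ u t0 := by
    have := mono_le (f := fun x => u x - 1 / 2 / L * x) ht0pos.le
      (fun x hx => (G.du x ⟨hx.1, hx.2.trans ht0I.2⟩).sub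
        ((hasDerivAt_id x).const_mul (1 / 2 / L))) (fun x hx => ?_)
    · simp only [G.u_zero, mul_zero, sub_zero] at this
      linarith
    have hx' : x ∈ Icc 0 T := ⟨hx.1.le, hx.2.le.trans ht0I.2⟩
    have e1 := hpB x hx' hx.2.le
    have e2 := mul_le_mul_of_nonneg_left hx.2.le hBpos.le
    have e3 : cos (π / 3) ≤ cos (p x) :=
      cos_le_cos_of_nonneg_of_le_pi (G.p_mem x hx').1 (by linarith) (by linarith)
    rw [cos_pi_div_three] at e3
    have e4 := G.rpos x hx'
    have e5 : r x ≤ L := (G.r_le x hx').trans hr0.2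
    have e6 : 1 / 2 / L ≤ cos (p x) / r x := by gcongr
    simpa using e6
  -- up to the turning time
  have hrm : ∀ t ∈ Icc 0 m, ρ1 ≤ r t := by
    have key : ρ1 ≤ r m := by
      have := mono_le (f := fun x => p x + cc k * u x + e * log (r x)) ht0m.le
        (fun x hx => by
          have hx' : x ∈ Icc 0 T := ⟨ht0I.1.trans hx.1, hx.2.trans hm.2.le⟩
          exact ((G.dp x hx').add ((G.du x hx').const_mul (cc k))).add
            (((G.dr x hx').log (G.rpos x hx').ne').const_mul e)) (fun x hx => ?_)
      · have e1 := (G.p_mem t0 ht0I).1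
        have e2 := G.u_nonneg t0 ht0I
        have e3 : log (ra / 2) ≤ log (r t0) :=
          log_le_log (by positivity) (hrhalf t0 ht0I le_rfl)
        have e4 : cc k * u m ≤ cc k * (π / 4) := by
          have := G.uhi m hmI
          gcongr
        have e5 : 0 ≤ cc k * u t0 := by positivity
        have e6 := mul_le_mul_of_nonneg_left e3 hepos.le
        simp only [hpm] at this
        rw [hρ1, ← le_log_iff_exp_le (G.rpos m hmI)]
        have e7 : log (ra / 2) - log (r m) ≤ (π / 2 + cc k * (π / 4)) / e := by
          rw [le_div_iff₀ hepos]
          linarith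
        linarith
      have hx' : x ∈ Icc 0 T := ⟨ht0I.1.trans hx.1.le, hx.2.le.trans hm.2.le⟩
      have e1 := G.rpos x hx'
      have e2 := G.cos_nonneg_before hm h1 x ⟨hx'.1, hx.2⟩
      have e3 := G.sin_nonneg x hx'
      have e4 : u0 ≤ u x := hut0.trans (G.u_le_turn hm h1 t0 x ht0I.1 hx.1.le hx.2.le)
      have e5 : 2 * u0 ≤ tan (2 * u x) := by
        have := le_tan (x := 2 * u x) (by linarith) (by linarith [G.uhi x hx'])
        linarith
      have e6 : 2 * ((k : ℝ) + 1) / r x * (2 * u0) * sin (p x) ≤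
        2 * ((k : ℝ) + 1) / r x * tan (2 * u x) * sin (p x) := by gcongr
      have e7 : cos (p x) * hh k (r x) + cc k * (cos (p x) / r x) = cos (p x) * (r x / 2) := by
        rw [hh_eq]; ring
      have e8 : e * (-sin (p x) / r x) = -(2 * ((k : ℝ) + 1) / r x * (2 * u0) * sin (p x)) := by
        rw [he]; ring
      have e9 : 0 ≤ cos (p x) * (r x / 2) := by positivity
      unfold pdot
      linarith
    intro t ht
    exact key.trans (G.r_anti ht.1 ht.2 hm.2.le)
  refine ⟨ht0I.2, fun t ht => ?_⟩
  by_contra hcon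
  rw [not_le, lt_min_iff] at hcon
  obtain ⟨hc3, hc2⟩ := hcon
  have hρ21 : ρ2 ≤ ρ1 := min_le_left _ _
  have hmt : m < t := by
    by_contra h
    have := hrm t ⟨ht.1, not_lt.1 h⟩
    linarith
  have hcont : ContinuousOn r (Icc 0 T) :=
    fun t ht => (G.dr t ht).continuousAt.continuousWithinAt
  obtain ⟨s, hs, hrs⟩ : ∃ s ∈ Icc m t, r s = ρ2 := by
    have := intermediate_value_Icc' (f := r) hmt.le
      (hcont.mono (Icc_subset_Icc hm.1.le ht.2))
    exact this ⟨by linarith, hρ21.trans (hrm m ⟨hm.1.le, le_rfl⟩)⟩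
  obtain ⟨s', hs', hrs'⟩ : ∃ s' ∈ Icc s t, r s' = ρ2 / 2 := by
    have := intermediate_value_Icc' (f := r) hs.2
      (hcont.mono (Icc_subset_Icc (hm.1.le.trans hs.1) ht.2))
    exact this ⟨by linarith, by linarith⟩
  have hs0 : 0 ≤ s := hm.1.le.trans hs.1
  have hlip := G.r_lip hs0 hs'.1 (hs'.2.trans ht.2)
  rw [hrs, hrs'] at hlip
  have hrs2 : r s ^ 2 ≤ 2 * cc k := by
    rw [hrs]
    have : ρ2 ≤ √(2 * cc k) := min_le_right _ _
    calc ρ2 ^ 2 ≤ √(2 * cc k) ^ 2 := by gcongr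
      _ = 2 * cc k := Real.sq_sqrt (by positivity)
  have hps : π / 2 ≤ p s := by
    rcases hs.1.eq_or_lt with h | h
    · rw [← h, hpm]
    · exact (h2 s ⟨h, hs.2.trans ht.2⟩).le
  have hgrow : ∀ x ∈ Icc s' t, π / 2 + μ * (ρ2 / 2) ≤ p x := by
    intro x hx
    have e1 := G.grow2 hm h2 hs.1 (hs'.1.trans hx.1) (hx.2.trans ht.2) hrs2
    have e2 : μ * (ρ2 / 2) ≤ μ * (x - s) := by
      have := hx.1
      gcongr
      linarith
    linarith
  have hs'0 : 0 ≤ s' := hs0.trans hs'.1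
  have hfin := mono_le (f := fun x => q1 * log (r x) - u x) hs'.2
    (fun x hx => by
      have hx' : x ∈ Icc 0 T := ⟨hs'0.trans hx.1, hx.2.trans ht.2⟩
      exact (((G.dr x hx').log (G.rpos x hx').ne').const_mul q1).sub (G.du x hx'))
    (fun x hx => by
      have hx' : x ∈ Icc 0 T := ⟨hs'0.trans hx.1.le, hx.2.le.trans ht.2⟩
      have e1 := hgrow x (Ioo_subset_Icc_self hx)
      have e2 := (G.p_mem x hx').2
      have e3 : q1 ≤ -cos (p x) := by
        rw [← sin_sub_pi_div_two, hq1]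
        apply sin_le_sin_of_le_of_le_pi_div_two
        · have : 0 < min (μ * (ρ2 / 2)) (π / 2) := by positivity
          linarith
        · linarith
        · exact (min_le_left _ _).trans (by linarith)
      have e4 := G.rpos x hx'
      have e5 := G.sin_nonneg x hx'
      have e6 : q1 * sin (p x) ≤ q1 * 1 := by gcongr; exact sin_le_one _
      have e7 : 0 ≤ (-cos (p x) - q1 * sin (p x)) / r x := div_nonneg (by linarith) e4.le
      have e8 : (-cos (p x) - q1 * sin (p x)) / r x =
        q1 * (-sin (p x) / r x) - cos (p x) / r x := by ring
      linarith)
  have e1 := G.uhi s' ⟨hs'0, hs'.2.trans ht.2⟩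
  have e2 := G.u_nonneg t ht
  simp only [hrs'] at hfin
  have e3 : log (ρ2 / 2) - log (r t) ≤ π / 4 / q1 := by
    rw [le_div_iff₀ hq1pos]
    linarith
  have e4 : ρ3 ≤ r t := by
    rw [hρ3, ← le_log_iff_exp_le (G.rpos t ht)]
    linarith
  linarith

end LamCurve

namespace LamCurve

open Set Filter Topology
open scoped NNReal

/-- Bounded Lipschitz real functions. -/
def BL {E : Type*} [PseudoMetricSpace E] (f : E → ℝ) : Prop :=
  (∃ C, 0 ≤ C ∧ ∀ x, |f x| ≤ C) ∧ (∃ K, 0 ≤ K ∧ ∀ x y, |f x - f y| ≤ K * dist x y)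

namespace BL

variable {E : Type*} [PseudoMetricSpace E] {f g : E → ℝ}

theorem const (c : ℝ) : BL (fun _ : E => c) :=
  ⟨⟨|c|, abs_nonneg _, fun _ => le_rfl⟩, ⟨0, le_rfl, fun x y => by simp⟩⟩

theorem add (hf : BL f) (hg : BL g) : BL (fun x => f x + g x) := by
  obtain ⟨⟨C, hC0, hC⟩, K, hK0, hK⟩ := hf
  obtain ⟨⟨D, hD0, hD⟩, J, hJ0, hJ⟩ := hg
  refine ⟨⟨C + D, by positivity, fun x => (abs_add_le _ _).trans (add_le_add (hC x) (hD x))⟩,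
    ⟨K + J, by positivity, fun x y => ?_⟩⟩
  have : f x + g x - (f y + g y) = (f x - f y) + (g x - g y) := by ring
  rw [this, add_mul]
  exact (abs_add_le _ _).trans (add_le_add (hK x y) (hJ x y))

theorem mul (hf : BL f) (hg : BL g) : BL (fun x => f x * g x) := by
  obtain ⟨⟨C, hC0, hC⟩, K, hK0, hK⟩ := hf
  obtain ⟨⟨D, hD0, hD⟩, J, hJ0, hJ⟩ := hg
  refine ⟨⟨C * D, by positivity, fun x => ?_⟩, ⟨K * D + C * J, by positivity, fun x y => ?_⟩⟩
  · rw [abs_mul]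
    exact mul_le_mul (hC x) (hD x) (abs_nonneg _) hC0
  · have : f x * g x - f y * g y = (f x - f y) * g x + f y * (g x - g y) := by ring
    rw [this]
    refine (abs_add_le _ _).trans ?_
    rw [abs_mul, abs_mul]
    have h1 : |f x - f y| * |g x| ≤ (K * dist x y) * D :=
      mul_le_mul (hK x y) (hD x) (abs_nonneg _) (by positivity)
    have h2 : |f y| * |g x - g y| ≤ C * (J * dist x y) :=
      mul_le_mul (hC y) (hJ x y) (abs_nonneg _) hC0
    linarith

theorem inv (hf : BL f) {c : ℝ} (hc : 0 < c) (h : ∀ x, c ≤ f x) : BL (fun x => (f x)⁻¹) := by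
  obtain ⟨⟨C, hC0, hC⟩, K, hK0, hK⟩ := hf
  refine ⟨⟨c⁻¹, by positivity, fun x => ?_⟩, ⟨K * (c⁻¹ * c⁻¹), by positivity, fun x y => ?_⟩⟩
  · have := h x
    have h0 : 0 < f x := hc.trans_le this
    rw [abs_of_pos (inv_pos.2 h0)]
    exact inv_anti₀ hc this
  · have hx := h x
    have hy := h y
    have hx0 : 0 < f x := hc.trans_le hx
    have hy0 : 0 < f y := hc.trans_le hy
    have : (f x)⁻¹ - (f y)⁻¹ = (f y - f x) * ((f x)⁻¹ * (f y)⁻¹) := by field_simp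
    rw [this, abs_mul, abs_of_pos (by positivity : 0 < (f x)⁻¹ * (f y)⁻¹), abs_sub_comm]
    have h1 : (f x)⁻¹ * (f y)⁻¹ ≤ c⁻¹ * c⁻¹ := by gcongr
    calc |f x - f y| * ((f x)⁻¹ * (f y)⁻¹) ≤ (K * dist x y) * (c⁻¹ * c⁻¹) :=
          mul_le_mul (hK x y) h1 (by positivity) (by positivity)
      _ = _ := by ring

theorem sin' (hf : ∃ K, 0 ≤ K ∧ ∀ x y, |f x - f y| ≤ K * dist x y) : BL (fun x => sin (f x)) := by
  obtain ⟨K, hK0, hK⟩ := hf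
  refine ⟨⟨1, by norm_num, fun x => abs_sin_le_one _⟩, ⟨K, hK0, fun x y => ?_⟩⟩
  have := (Real.lipschitzWith_sin).dist_le_mul (f x) (f y)
  simp only [Real.dist_eq, NNReal.coe_one, one_mul] at this
  exact this.trans (hK x y)

theorem cos' (hf : ∃ K, 0 ≤ K ∧ ∀ x y, |f x - f y| ≤ K * dist x y) : BL (fun x => cos (f x)) := by
  obtain ⟨K, hK0, hK⟩ := hf
  refine ⟨⟨1, by norm_num, fun x => abs_cos_le_one _⟩, ⟨K, hK0, fun x y => ?_⟩⟩
  have := (Real.lipschitzWith_cos).dist_le_mul (f x) (f y)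
  simp only [Real.dist_eq, NNReal.coe_one, one_mul] at this
  exact this.trans (hK x y)

end BL

/-- Clamp to `[a, b]`. -/
noncomputable def clp (a b r : ℝ) : ℝ := max a (min b r)

theorem clp_lip (a b r s : ℝ) : |clp a b r - clp a b s| ≤ |r - s| := by
  unfold clp
  refine (abs_max_sub_max_le_max _ _ _ _).trans ?_
  simp only [sub_self, abs_zero]
  refine max_le (abs_nonneg _) ?_
  refine (abs_min_sub_min_le_max _ _ _ _).trans ?_
  simp

theorem clp_ge (a b r : ℝ) : a ≤ clp a b r := le_max_left _ _

theorem clp_le {a b : ℝ} (h : a ≤ b) (r : ℝ) : clp a b r ≤ b := max_le h (min_le_left _ _)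

theorem clp_eq {a b r : ℝ} (h : r ∈ Icc a b) : clp a b r = r := by
  unfold clp
  rw [min_eq_right h.2, max_eq_right h.1]

theorem clp_neg (a r : ℝ) (ha : 0 ≤ a) : clp (-a) a (-r) = - clp (-a) a r := by
  unfold clp
  rcases le_total r a with h | h <;> rcases le_total (-a) r with h' | h'
  · rw [min_eq_right h, max_eq_right h', min_eq_right (by linarith), max_eq_right (by linarith)]
  · rw [min_eq_right h, max_eq_left h', min_eq_left (by linarith), max_eq_right (by linarith)]; ring
  · rw [min_eq_left h, max_eq_right (by linarith : -a ≤ a), min_eq_right (by linarith : -r ≤ a),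
      max_eq_left (by linarith : -r ≤ -a)]
  · rw [min_eq_left h, max_eq_right (by linarith : -a ≤ a), min_eq_right (by linarith : -r ≤ a),
      max_eq_left (by linarith : -r ≤ -a)]

/-- The clamped vector field. -/
noncomputable def VF (k : ℕ) (μ ρ M κ : ℝ) (z : ℝ × ℝ × ℝ) : ℝ × ℝ × ℝ :=
  (-sin z.2.2, cos z.2.2 / clp ρ M z.1, pdot k μ (clp ρ M z.1) (clp (-κ) κ z.2.1) z.2.2)

theorem clp_BL {E : Type*} [PseudoMetricSpace E] {f : E → ℝ} {a b : ℝ} (hab : a ≤ b)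
    (hf : ∃ K, 0 ≤ K ∧ ∀ x y, |f x - f y| ≤ K * dist x y) : BL (fun x => clp a b (f x)) := by
  obtain ⟨K, hK0, hK⟩ := hf
  refine ⟨⟨max |a| |b|, by positivity, fun x => ?_⟩, ⟨K, hK0, fun x y =>
    (clp_lip _ _ _ _).trans (hK x y)⟩⟩
  exact abs_le_max_abs_abs (clp_ge _ _ _) (clp_le hab _)

theorem VF_BL (k : ℕ) (μ : ℝ) {ρ M κ : ℝ} (hρ : 0 < ρ) (hM : ρ ≤ M) (hκ0 : 0 ≤ κ) (hκ : κ < π / 4) :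
    BL (fun z => (VF k μ ρ M κ z).1) ∧ BL (fun z => (VF k μ ρ M κ z).2.1) ∧
      BL (fun z => (VF k μ ρ M κ z).2.2) := by
  have hpi := pi_pos
  have l1 : ∃ K, 0 ≤ K ∧ ∀ x y : ℝ × ℝ × ℝ, |x.1 - y.1| ≤ K * dist x y :=
    ⟨1, by norm_num, fun x y => by rw [one_mul, Prod.dist_eq, ← Real.dist_eq]; exact le_max_left _ _⟩
  have l2 : ∃ K, 0 ≤ K ∧ ∀ x y : ℝ × ℝ × ℝ, |x.2.1 - y.2.1| ≤ K * dist x y :=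
    ⟨1, by norm_num, fun x y => by
      rw [one_mul, Prod.dist_eq, ← Real.dist_eq, Prod.dist_eq]
      exact (le_max_left _ _).trans (le_max_right _ _)⟩
  have l3 : ∃ K, 0 ≤ K ∧ ∀ x y : ℝ × ℝ × ℝ, |x.2.2 - y.2.2| ≤ K * dist x y :=
    ⟨1, by norm_num, fun x y => by
      rw [one_mul, Prod.dist_eq, ← Real.dist_eq, Prod.dist_eq]
      exact (le_max_right _ _).trans (le_max_right _ _)⟩
  have bs := BL.sin' l3
  have bc := BL.cos' l3
  have bcl := clp_BL hM l1
  have bi := bcl.inv hρ (fun x => clp_ge _ _ _)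
  have bu := clp_BL (by linarith : -κ ≤ κ) l2
  have bu2 := (BL.const (E := ℝ × ℝ × ℝ) 2).mul bu
  have bsu := BL.sin' bu2.2
  have bcu := BL.cos' bu2.2
  have hcpos : 0 < cos (2 * κ) := cos_pos_of_mem_Ioo ⟨by linarith, by linarith⟩
  have bicu := bcu.inv hcpos (fun x => by
    have h1 := clp_ge (-κ) κ x.2.1
    have h2 := clp_le (by linarith : -κ ≤ κ) x.2.1
    rw [← cos_abs (2 * clp (-κ) κ x.2.1)]
    refine cos_le_cos_of_nonneg_of_le_pi (abs_nonneg _) (by linarith) ?_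
    rw [abs_le]; constructor <;> linarith)
  refine ⟨?_, ?_, ?_⟩
  · convert (BL.const (E := ℝ × ℝ × ℝ) (-1)).mul bs using 2
    simp [VF]
  · convert bc.mul bi using 2
    simp [VF, div_eq_mul_inv]
  · have e1 := bc.mul (((BL.const (E := ℝ × ℝ × ℝ) (1/2)).mul bcl).add
      ((BL.const (E := ℝ × ℝ × ℝ) (-(2 * ((k : ℝ) + 1) + 1))).mul bi))
    have e2 := ((((BL.const (E := ℝ × ℝ × ℝ) (2 * ((k : ℝ) + 1))).mul bi).mul
      (bsu.mul bicu)).mul bs)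
    convert (e1.add (BL.const μ)).add e2 using 2 with z
    simp only [VF, pdot, hh, tan_eq_sin_div_cos]
    ring

theorem VF_lip (k : ℕ) (μ : ℝ) {ρ M κ : ℝ} (hρ : 0 < ρ) (hM : ρ ≤ M) (hκ0 : 0 ≤ κ)
    (hκ : κ < π / 4) :
    ∃ K L : ℝ≥0, LipschitzWith K (VF k μ ρ M κ) ∧ ∀ z, ‖VF k μ ρ M κ z‖ ≤ L := by
  obtain ⟨⟨⟨C1, hC10, hC1⟩, K1, hK10, hK1⟩, ⟨⟨C2, hC20, hC2⟩, K2, hK20, hK2⟩,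
    ⟨⟨C3, hC30, hC3⟩, K3, hK30, hK3⟩⟩ := VF_BL k μ hρ hM hκ0 hκ
  refine ⟨(K1 + K2 + K3).toNNReal, (C1 + C2 + C3).toNNReal, ?_, ?_⟩
  · refine LipschitzWith.of_dist_le_mul fun x y => ?_
    have hd : 0 ≤ dist x y := dist_nonneg
    have a1 := hK1 x y
    have a2 := hK2 x y
    have a3 := hK3 x y
    have b1 : 0 ≤ K1 * dist x y := by positivity
    have b2 : 0 ≤ K2 * dist x y := by positivity
    have b3 : 0 ≤ K3 * dist x y := by positivity
    rw [Prod.dist_eq, Prod.dist_eq, Real.dist_eq, Real.dist_eq, Real.dist_eq]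
    rw [Real.coe_toNNReal _ (by positivity)]
    refine max_le ?_ (max_le ?_ ?_) <;> nlinarith
  · intro z
    have a1 := hC1 z
    have a2 := hC2 z
    have a3 := hC3 z
    rw [Prod.norm_def, Prod.norm_def, Real.norm_eq_abs, Real.norm_eq_abs, Real.norm_eq_abs]
    rw [Real.coe_toNNReal _ (by positivity)]
    refine max_le ?_ (max_le ?_ ?_) <;> linarith

theorem dist_sol_abs {E : Type*} [NormedAddCommGroup E] [NormedSpace ℝ E]
    {V : E → E} {K : ℝ≥0} (hK : LipschitzWith K V) {f g : ℝ → E}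
    (hf : ∀ t, HasDerivAt f (V (f t)) t) (hg : ∀ t, HasDerivAt g (V (g t)) t) :
    ∀ t, dist (f t) (g t) ≤ dist (f 0) (g 0) * exp (K * |t|) := by
  intro t
  rcases le_total 0 t with ht | ht
  · rw [abs_of_nonneg ht]
    exact dist_sol hK hf hg t ht
  · have hK' : LipschitzWith K (fun x => - V x) := by
      exact hK.neg
    have key : ∀ h : ℝ → E, (∀ t, HasDerivAt h (V (h t)) t) →
        ∀ t, HasDerivAt (fun s => h (-s)) (-V (h (-t))) t := by
      intro h hh t
      have := (hh (-t)).scomp t (hasDerivAt_neg t)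
      rw [neg_one_smul] at this
      exact this
    have := dist_sol hK' (key f hf) (key g hg) (-t) (by linarith)
    rw [abs_of_nonpos ht]
    simpa using this

theorem exists_flow {V : ℝ × ℝ × ℝ → ℝ × ℝ × ℝ} {K L : ℝ≥0} (hK : LipschitzWith K V)
    (hL : ∀ z, ‖V z‖ ≤ L) :
    ∃ Φ : ℝ → ℝ → ℝ × ℝ × ℝ, (∀ r0, Φ r0 0 = (r0, 0, 0)) ∧
      (∀ r0 t, HasDerivAt (Φ r0) (V (Φ r0 t)) t) ∧
      Continuous (fun z : ℝ × ℝ => Φ z.1 z.2) := by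
  choose Φ h0 hΦ using fun r0 : ℝ => exists_global_sol V K L hK hL (r0, 0, 0)
  refine ⟨Φ, h0, hΦ, ?_⟩
  rw [continuous_iff_continuousAt]
  rintro ⟨r, t⟩
  rw [ContinuousAt, tendsto_iff_dist_tendsto_zero]
  have hb : ∀ z : ℝ × ℝ, dist (Φ z.1 z.2) (Φ r t) ≤
      |z.1 - r| * exp (K * |z.2|) + dist (Φ r z.2) (Φ r t) := by
    intro z
    refine (dist_triangle _ (Φ r z.2) _).trans ?_
    gcongr
    have := dist_sol_abs hK (hΦ z.1) (hΦ r) z.2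
    rw [h0, h0] at this
    simpa [Prod.dist_eq, Real.dist_eq] using this
  refine squeeze_zero (fun _ => dist_nonneg) hb ?_
  have hcr : Continuous (Φ r) := continuous_iff_continuousAt.2 fun t => (hΦ r t).continuousAt
  have hc : Continuous fun z : ℝ × ℝ => |z.1 - r| * exp (K * |z.2|) + dist (Φ r z.2) (Φ r t) := by
    fun_prop
  have := hc.tendsto (r, t)
  simpa using this

/-- components of a solution of the clamped system -/
theorem VF_comp {k : ℕ} {μ ρ M κ : ℝ} {γ : ℝ → ℝ × ℝ × ℝ} {t : ℝ}
    (h : HasDerivAt γ (VF k μ ρ M κ (γ t)) t) :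
    HasDerivAt (fun s => (γ s).1) (-sin (γ t).2.2) t ∧
    HasDerivAt (fun s => (γ s).2.1) (cos (γ t).2.2 / clp ρ M (γ t).1) t ∧
    HasDerivAt (fun s => (γ s).2.2)
      (pdot k μ (clp ρ M (γ t).1) (clp (-κ) κ (γ t).2.1) (γ t).2.2) t := by
  have h1 := h.fst
  have h2 := h.snd
  exact ⟨h1, h2.fst, h2.snd⟩

/-- A good arc inside the clamping region solves the clamped system. -/
theorem Good.clamped {k : ℕ} {μ r0 T : ℝ} {r u p : ℝ → ℝ} (G : Good k μ r0 T r u p)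
    {ρ M κ : ℝ} (hr : ∀ t ∈ Icc 0 T, r t ∈ Icc ρ M) (hu : ∀ t ∈ Icc 0 T, u t ∈ Icc (-κ) κ) :
    ∀ t ∈ Icc 0 T, HasDerivAt (fun s => (r s, u s, p s)) (VF k μ ρ M κ (r t, u t, p t)) t := by
  intro t ht
  have := (G.dr t ht).prodMk ((G.du t ht).prodMk (G.dp t ht))
  refine this.congr_deriv ?_
  simp only [VF]
  rw [clp_eq (hr t ht), clp_eq (hu t ht)]

end LamCurve

namespace LamCurve

open Set Filter Topology
open scoped NNReal

theorem good_of_clamped {k : ℕ} {μ ρ M κ r0 T : ℝ} {γ : ℝ → ℝ × ℝ × ℝ} (hρ : 0 < ρ)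
    (hκ : κ < π / 4) (h0 : γ 0 = (r0, 0, 0)) (hT : 0 < T)
    (hγ : ∀ t, HasDerivAt γ (VF k μ ρ M κ (γ t)) t)
    (hr : ∀ t ∈ Icc 0 T, (γ t).1 ∈ Icc ρ M) (hu : ∀ t ∈ Icc 0 T, (γ t).2.1 ≤ κ)
    (hu0 : ∀ t ∈ Ioo 0 T, 0 < (γ t).2.1) (huT : (γ T).2.1 = 0)
    (hp0 : ∀ t ∈ Ioo 0 T, 0 < (γ t).2.2) (hp1 : ∀ t ∈ Ioo 0 T, (γ t).2.2 < π) :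
    Good k μ r0 T (fun t => (γ t).1) (fun t => (γ t).2.1) (fun t => (γ t).2.2) := by
  have hκ0 : 0 ≤ κ := by
    have := hu T ⟨hT.le, le_rfl⟩
    rw [huT] at this; exact this
  have hu1 : ∀ t ∈ Icc 0 T, (γ t).2.1 ∈ Icc (-κ) κ := by
    intro t ht
    refine ⟨?_, hu t ht⟩
    rcases ht.1.eq_or_lt with h | h
    · rw [← h, h0]; simpa using hκ0
    rcases ht.2.eq_or_lt with h' | h'
    · rw [h', huT]; simpa using hκ0
    · linarith [hu0 t ⟨h, h'⟩]
  refine ⟨hT, by simp [h0], by simp [h0], by simp [h0], huT,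
    fun t ht => hρ.trans_le (hr t ht).1, hu0, fun t ht => (hu t ht).trans_lt hκ, hp0, hp1,
    fun t ht => (VF_comp (hγ t)).1, fun t ht => ?_, fun t ht => ?_⟩
  · have := (VF_comp (hγ t)).2.1
    rwa [clp_eq (hr t ht)] at this
  · have := (VF_comp (hγ t)).2.2
    rwa [clp_eq (hr t ht), clp_eq (hu1 t ht)] at this

theorem exists_large (k : ℕ) {μ : ℝ} (hμ : 0 < μ) (B : ℝ) :
    ∃ L, B ≤ L ∧ ∃ T r u p, Good k μ L T r u p := by
  have hpi := pi_pos
  have hpi4 := pi_le_four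
  have hcc := cc_pos k
  have hk : (0 : ℝ) ≤ k := k.cast_nonneg
  have hX : 0 < 2 * π / μ := by positivity
  set L : ℝ := |B| + 2 * π / μ + 8 * cc k + 8 * μ + 32 * ((k : ℝ) + 1) + 57 with hL
  have hB := le_abs_self B
  have hB0 := abs_nonneg B
  have hL57 : 57 ≤ L := by linarith
  have hL0 : 0 < L := by linarith
  have hLX : 2 * π / μ ≤ L := by linarith
  have hLc : 8 * cc k + 8 * μ + 32 * ((k : ℝ) + 1) + 57 ≤ L := by linarith
  have hLc2 : 8 * cc k + 56 ≤ L ^ 2 := by nlinarith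
  clear_value L
  refine ⟨L, by linarith, ?_⟩
  clear hL hB hB0
  have hLM : L / 2 ≤ 2 * L := by linarith
  obtain ⟨K, C, hK, hC⟩ := VF_lip k μ (by linarith : 0 < L / 2) hLM (κ := π / 8)
    (by linarith) (by linarith)
  obtain ⟨Φ, hΦ0, hΦ, -⟩ := exists_flow hK hC
  set γ := Φ L with hγdef
  have hγ0 : γ 0 = (L, 0, 0) := hΦ0 L
  have hγ := hΦ L
  rw [← hγdef] at hγ
  clear_value γ
  set E : ℝ := π / μ with hE
  have hE0 : 0 < E := by positivity
  have hEL : E ≤ L / 2 := by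
    have : 2 * π / μ = 2 * E := by rw [hE]; ring
    linarith
  -- radius
  have hr : ∀ t ∈ Icc 0 E, (γ t).1 ∈ Icc (L / 2) (2 * L) := by
    intro t ht
    have h1 := mono_le (f := fun s => (γ s).1 + s) ht.1
      (fun s _ => (VF_comp (hγ s)).1.add (hasDerivAt_id s))
      (fun s _ => by have := sin_le_one (γ s).2.2; linarith)
    have h2 := mono_le (f := fun s => s - (γ s).1) ht.1
      (fun s _ => (hasDerivAt_id s).sub (VF_comp (hγ s)).1)
      (fun s _ => by have := neg_one_le_sin (γ s).2.2; linarith)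
    simp only [hγ0] at h1 h2
    have := ht.2
    constructor <;> linarith
  have hcl : ∀ t, L / 2 ≤ clp (L / 2) (2 * L) (γ t).1 := fun t => clp_ge _ _ _
  have hhpos : ∀ x, L / 2 ≤ x → 2 * (μ + 4 * ((k : ℝ) + 1)) < hh k x := by
    intro x hx
    refine lt_of_lt_of_le ?_ (hh_mono (by linarith) hx)
    rw [hh_eq]
    have : cc k / (L / 2) ≤ cc k := div_le_self hcc.le (by linarith)
    linarith
  have htan : ∀ x, |tan (2 * clp (-(π / 8)) (π / 8) x)| ≤ 1 := by
    intro x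
    have h1 := clp_ge (-(π / 8)) (π / 8) x
    have h2 := clp_le (by linarith : -(π / 8) ≤ π / 8) x
    rw [abs_le]
    constructor
    · rw [← tan_pi_div_four, ← tan_neg]
      apply strictMonoOn_tan.monotoneOn ⟨by linarith, by linarith⟩ ⟨by linarith, by linarith⟩
      linarith
    · rw [← tan_pi_div_four]
      apply strictMonoOn_tan.monotoneOn ⟨by linarith, by linarith⟩ ⟨by linarith, by linarith⟩
      linarith
  have hp0 : ∀ t ∈ Ioc 0 E, 0 < (γ t).2.2 := by
    refine barrier (fun t _ => (VF_comp (hγ t)).2.2) (by simp [hγ0]) ?_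
    intro t _ ht
    have := hhpos _ (hcl t)
    rw [ht, pdot]
    simp only [cos_zero, sin_zero, mul_zero, one_mul, add_zero]
    linarith
  have hp1 : ∀ t ∈ Ioc 0 E, (γ t).2.2 < 3 * π / 4 := by
    have := barrier (f := fun t => -(γ t).2.2) (c := -(3 * π / 4))
      (fun t (_ : t ∈ Icc 0 E) => (VF_comp (hγ t)).2.2.neg) (by simp [hγ0]; linarith) ?_
    · intro t ht; linarith [this t ht]
    intro t _ ht
    have ht' : (γ t).2.2 = π - π / 4 := by linarith
    rw [ht', pdot, cos_pi_sub, sin_pi_sub, cos_pi_div_four, sin_pi_div_four]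
    have h1 := hhpos _ (hcl t)
    have h2 := abs_le.1 (htan (γ t).2.1)
    have h3 : 0 < clp (L / 2) (2 * L) (γ t).1 := by linarith [hcl t]
    have h4 : 2 * ((k : ℝ) + 1) / clp (L / 2) (2 * L) (γ t).1 ≤ 2 * ((k : ℝ) + 1) :=
      div_le_self (by linarith) (by linarith [hcl t])
    have h5 : 0 ≤ 2 * ((k : ℝ) + 1) / clp (L / 2) (2 * L) (γ t).1 := by positivity
    have h6 : 2 * ((k : ℝ) + 1) / clp (L / 2) (2 * L) (γ t).1 *
        tan (2 * clp (-(π / 8)) (π / 8) (γ t).2.1) ≤ 2 * ((k : ℝ) + 1) := by nlinarith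
    have h7 : 1 ≤ √2 := by rw [Real.one_le_sqrt]; norm_num
    nlinarith
  have hps : ∀ t ∈ Icc 0 E, 0 ≤ sin (γ t).2.2 := by
    intro t ht
    rcases ht.1.eq_or_lt with h | h
    · rw [← h, hγ0]; simp
    · exact sin_nonneg_of_nonneg_of_le_pi (hp0 t ⟨h, ht.2⟩).le (by linarith [hp1 t ⟨h, ht.2⟩])
  have hF : ∀ e ∈ Icc 0 E, (∀ t ∈ Ioo 0 e, 0 ≤ (γ t).2.1) →
      μ * e + ((γ e).1 ^ 2 / 2 - cc k) * (γ e).2.1 ≤ (γ e).2.2 := by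
    intro e he hpos
    have := mono_le (f := fun t => (γ t).2.2 - ((γ t).1 ^ 2 / 2 - cc k) * (γ t).2.1 - μ * t)
      (f' := fun t => 2 * ((k : ℝ) + 1) / (γ t).1 * tan (2 * clp (-(π / 8)) (π / 8) (γ t).2.1) *
        sin (γ t).2.2 + (γ t).1 * sin (γ t).2.2 * (γ t).2.1) he.1 ?_ ?_
    · simp only [hγ0, mul_zero, sub_zero] at this
      linarith
    · intro t ht
      have htE : t ∈ Icc 0 E := ⟨ht.1, ht.2.trans he.2⟩
      obtain ⟨d1, d2, d3⟩ := VF_comp (hγ t)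
      rw [clp_eq (hr t htE)] at d2 d3
      have hrp : 0 < (γ t).1 := by linarith [(hr t htE).1]
      have := (d3.sub ((((d1.pow 2).div_const 2).sub_const (cc k)).mul d2)).sub
        ((hasDerivAt_id t).const_mul μ)
      refine this.congr_deriv ?_
      simp only [pdot, hh_eq, Pi.pow_apply]
      push_cast
      field_simp
      ring
    · intro t ht
      have htE : t ∈ Icc 0 E := ⟨ht.1.le, ht.2.le.trans he.2⟩
      have hrp : 0 < (γ t).1 := by linarith [(hr t htE).1]
      have h1 := hps t htE
      have h2 := hpos t ht
      have h3 : 0 ≤ clp (-(π / 8)) (π / 8) (γ t).2.1 :=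
        le_max_of_le_right (le_min (by linarith) h2)
      have h4 := tan2_nonneg h3 (by
        have := clp_le (by linarith : -(π / 8) ≤ π / 8) (γ t).2.1; linarith)
      positivity
  have hcoef : ∀ t ∈ Icc 0 E, 7 ≤ (γ t).1 ^ 2 / 2 - cc k := by
    intro t ht
    have := (hr t ht).1
    nlinarith
  -- u becomes nonpositive
  have hex : ∃ e ∈ Ioc 0 E, (γ e).2.1 ≤ 0 := by
    by_contra hcon
    push Not at hcon
    have h1 := hF E ⟨hE0.le, le_rfl⟩ (fun t ht => (hcon t ⟨ht.1, ht.2.le⟩).le)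
    have h2 := hp1 E ⟨hE0, le_rfl⟩
    have h3 := hcon E ⟨hE0, le_rfl⟩
    have h4 := hcoef E ⟨hE0.le, le_rfl⟩
    have h5 : μ * E = π := by rw [hE]; field_simp
    nlinarith
  obtain ⟨e, he, hue⟩ := hex
  have hu' : HasDerivAt (fun s => (γ s).2.1) (1 / L) 0 := by
    have := (VF_comp (hγ 0)).2.1
    rw [hγ0, clp_eq ⟨by simp; linarith, by simp; linarith⟩] at this
    simpa using this
  have hev := pos_deriv_right hu' (by positivity)
  simp only [hγ0] at hev
  obtain ⟨s, hs0, hs⟩ := (mem_nhdsGT_iff_exists_Ioc_subset).1 hev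
  have hs0' : 0 < s := hs0
  have hse : s < e := by
    by_contra hcon
    push Not at hcon
    have : 0 < (γ e).2.1 := hs ⟨he.1, hcon⟩
    linarith
  obtain ⟨T, hT, hT0, hTpos⟩ := first_zero (f := fun t => (γ t).2.1) hse.le
    (fun t _ => (VF_comp (hγ t)).2.1.continuousAt.continuousWithinAt) (hs ⟨hs0, le_rfl⟩) hue
  have hTpos' : 0 < T := hs0'.trans hT.1
  have hTE : T ≤ E := hT.2.trans he.2
  have hup : ∀ t ∈ Ioo 0 T, 0 < (γ t).2.1 := by
    intro t ht
    rcases le_total t s with h | h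
    · exact hs ⟨ht.1, h⟩
    · exact hTpos t ⟨h, ht.2⟩
  refine ⟨T, _, _, _, good_of_clamped (by linarith) (by linarith : π / 8 < π / 4) hγ0 hTpos' hγ
    (fun t ht => hr t ⟨ht.1, ht.2.trans hTE⟩) ?_ hup hT0
    (fun t ht => hp0 t ⟨ht.1, ht.2.le.trans hTE⟩)
    (fun t ht => by linarith [hp1 t ⟨ht.1, ht.2.le.trans hTE⟩])⟩
  intro t ht
  rcases ht.1.eq_or_lt with h | h
  · rw [← h, hγ0]; simp; linarith
  have htE : t ∈ Icc 0 E := ⟨ht.1, ht.2.trans hTE⟩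
  have h1 := hF t htE (fun x hx => (hup x ⟨hx.1, hx.2.trans_le ht.2⟩).le)
  have h2 := hp1 t ⟨h, htE.2⟩
  have h3 := hcoef t htE
  have h4 : 0 < μ * t := by positivity
  by_contra hcon
  push Not at hcon
  nlinarith

end LamCurve

namespace LamCurve

open Set Filter Topology
open scoped NNReal

theorem exists_ra (k : ℕ) {μ : ℝ} (hμ : 0 < μ) :
    ∃ ra, 0 < ra ∧ 0 < hh k ra + μ ∧ ∀ T r u p, ¬ Good k μ ra T r u p := by
  have hc0 := c0_pos k hμ
  have hcc := cc_pos k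
  set X := exp (μ * √(2 * cc k) * (π / 4)) with hX
  have hX0 : 0 < X := exp_pos _
  set δ := min μ (μ * c0 k μ / X) with hδ
  have hδ0 : 0 < δ := lt_min hμ (by positivity)
  have hδμ : δ ≤ μ := min_le_left _ _
  have hδX : δ * X ≤ μ * c0 k μ := by
    have : δ ≤ μ * c0 k μ / X := min_le_right _ _
    rwa [le_div_iff₀ hX0] at this
  set s := μ - δ with hs
  have hs0 : 0 ≤ s := by linarith
  set ra := -s + √(s ^ 2 + 2 * cc k) with hra
  have hsq : √(s ^ 2 + 2 * cc k) ^ 2 = s ^ 2 + 2 * cc k := Real.sq_sqrt (by positivity)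
  have hra0 : 0 < ra := by
    have : s < √(s ^ 2 + 2 * cc k) := Real.lt_sqrt_of_sq_lt (by linarith)
    linarith
  have hrasq : ra ^ 2 + 2 * s * ra = 2 * cc k := by
    rw [hra]; linarith [hsq, (by ring : (-s + √(s ^ 2 + 2 * cc k)) ^ 2 + 2 * s * (-s + √(s ^ 2 + 2 * cc k)) = √(s ^ 2 + 2 * cc k) ^ 2 - s ^ 2)]
  have hle : ra ^ 2 ≤ 2 * cc k := by
    have : 0 ≤ 2 * s * ra := by positivity
    linarith
  have hh1 : hh k ra + μ = δ := by
    rw [hh_eq]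
    have : cc k / ra = ra / 2 + s := by
      rw [div_eq_iff hra0.ne']; nlinarith
    rw [this]; linarith
  refine ⟨ra, hra0, by rw [hh1]; exact hδ0, ?_⟩
  intro T r u p G
  have := G.near_circle hμ hle (by rw [hh1]; exact hδ0.le)
  rw [hh1, ← hX] at this
  linarith

/-- Uniform bounds on good arcs. -/
theorem unif (k : ℕ) {μ ra L : ℝ} (hμ : 0 < μ) (hra : 0 < ra) (hL : ra ≤ L) :
    ∃ ρ M κ t0, 0 < ρ ∧ ρ < ra ∧ L < M ∧ 0 < κ ∧ κ < π / 4 ∧ 0 < t0 ∧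
      ∀ r0 ∈ Icc ra L, ∀ T r u p, Good k μ r0 T r u p →
      t0 ≤ T ∧ ∀ t ∈ Icc 0 T, r t ∈ Ioo ρ M ∧ u t < κ := by
  obtain ⟨ρ, hρ, t0, ht0, h⟩ := lower_bounds k hμ hra hL
  have hc0 := c0_pos k hμ
  have ha : arccos (c0 k μ) < π / 2 := arccos_lt_pi_div_two.2 hc0
  have ha0 := arccos_nonneg (c0 k μ)
  refine ⟨min ρ ra / 2, L + 1, (arccos (c0 k μ) / 2 + π / 4) / 2, t0, by positivity, ?_,
    by linarith, by linarith [pi_pos], by linarith, ht0, ?_⟩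
  · have := min_le_right ρ ra
    linarith
  intro r0 hr0 T r u p G
  obtain ⟨h1, h2⟩ := h r0 hr0 T r u p G
  refine ⟨h1, fun t ht => ⟨⟨?_, ?_⟩, ?_⟩⟩
  · have := min_le_left ρ ra
    have := h2 t ht
    linarith
  · linarith [G.r_le t ht, hr0.2]
  · have h3 := G.cos_ge hμ t ht
    have h4 := G.u_nonneg t ht
    have h5 := G.uhi t ht
    have h6 := arccos_le_arccos h3
    rw [arccos_cos (by linarith) (by linarith)] at h6
    linarith

/-- A good arc coincides with the clamped flow. -/
theorem good_flow {k : ℕ} {μ ρ M κ r0 T : ℝ} {r u p : ℝ → ℝ} {K : ℝ≥0}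
    (hK : LipschitzWith K (VF k μ ρ M κ)) (hρ : 0 < ρ) (hκ : κ < π / 4)
    (G : Good k μ r0 T r u p) {γ : ℝ → ℝ × ℝ × ℝ} (h0 : γ 0 = (r0, 0, 0))
    (hγ : ∀ t, HasDerivAt γ (VF k μ ρ M κ (γ t)) t)
    (hb : ∀ t ∈ Icc 0 T, r t ∈ Ioo ρ M ∧ u t < κ) :
    (∀ t ∈ Icc 0 T, γ t = (r t, u t, p t)) ∧
    Good k μ r0 T (fun t => (γ t).1) (fun t => (γ t).2.1) (fun t => (γ t).2.2) := by
  have hκ0 : 0 ≤ κ := by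
    have := (hb 0 ⟨le_rfl, G.Tpos.le⟩).2
    rw [G.u_zero] at this; exact this.le
  have h1 := G.clamped (ρ := ρ) (M := M) (κ := κ) (fun t ht => Ioo_subset_Icc_self (hb t ht).1)
    (fun t ht => ⟨by linarith [G.u_nonneg t ht], (hb t ht).2.le⟩)
  have h2 := sol_unique_Icc hK h1 hγ (by rw [h0, G.r_zero, G.u_zero, G.p_zero])
  have h3 : ∀ t ∈ Icc 0 T, γ t = (r t, u t, p t) := fun t ht => (h2 t ht).symm
  refine ⟨h3, good_of_clamped hρ hκ h0 G.Tpos hγ ?_ ?_ ?_ ?_ ?_ ?_⟩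
  · intro t ht; rw [h3 t ht]; exact Ioo_subset_Icc_self (hb t ht).1
  · intro t ht; rw [h3 t ht]; exact (hb t ht).2.le
  · intro t ht; rw [h3 t (Ioo_subset_Icc_self ht)]; exact G.upos t ht
  · rw [h3 T ⟨G.Tpos.le, le_rfl⟩]; exact G.u_T
  · intro t ht; rw [h3 t (Ioo_subset_Icc_self ht)]; exact G.ppos t ht
  · intro t ht; rw [h3 t (Ioo_subset_Icc_self ht)]; exact G.phi t ht

/-- A weakly good arc is good. -/
theorem good_of_weak {k : ℕ} {μ ρ M κ r0 T : ℝ} {K : ℝ≥0} (hμ : 0 < μ)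
    (hK : LipschitzWith K (VF k μ ρ M κ)) (hρ : 0 < ρ) (hκ0 : 0 < κ) (hκ : κ < π / 4)
    (hr0 : r0 ∈ Icc ρ M) (hh0 : 0 < hh k r0 + μ) (hT : 0 < T)
    {γ : ℝ → ℝ × ℝ × ℝ} (h0 : γ 0 = (r0, 0, 0))
    (hγ : ∀ t, HasDerivAt γ (VF k μ ρ M κ (γ t)) t) (huT : (γ T).2.1 = 0)
    (hr : ∀ t ∈ Icc 0 T, (γ t).1 ∈ Icc ρ M) (hu : ∀ t ∈ Icc 0 T, (γ t).2.1 ∈ Icc 0 κ)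
    (hp : ∀ t ∈ Icc 0 T, (γ t).2.2 ∈ Icc 0 π) :
    Good k μ r0 T (fun t => (γ t).1) (fun t => (γ t).2.1) (fun t => (γ t).2.2) := by
  have hpi := pi_pos
  have hn : ∀ s ∈ Ioo 0 T, Icc 0 T ∈ 𝓝 s := fun s hs => Icc_mem_nhds hs.1 hs.2
  have hne : ∀ x, clp ρ M x ≠ 0 := fun x => (hρ.trans_le (clp_ge _ _ _)).ne'
  have hp0 : ∀ s ∈ Ioo 0 T, 0 < (γ s).2.2 := by
    intro s hs
    refine lt_of_le_of_ne (hp s (Ioo_subset_Icc_self hs)).1 (fun heq => ?_)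
    have hmin : IsLocalMin (fun t => (γ t).2.2) s := by
      filter_upwards [hn s hs] with t ht
      rw [← heq]; exact (hp t ht).1
    have hd := hmin.hasDerivAt_eq_zero (VF_comp (hγ s)).2.2
    rw [← heq] at hd
    have hd' : hh k (clp ρ M (γ s).1) + μ = 0 := by simpa [pdot] using hd
    have := sol_unique hK hγ (g := fun t => ((γ s).1, (γ s).2.1 + (t - s) / clp ρ M (γ s).1, 0))
      (fun t => by
        have e1 := hasDerivAt_const t (γ s).1
        have e2 := (((hasDerivAt_id t).sub_const s).div_const (clp ρ M (γ s).1)).const_add (γ s).2.1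
        have e3 := hasDerivAt_const t (0 : ℝ)
        refine (e1.prodMk (e2.prodMk e3)).congr_deriv ?_
        simp [VF, pdot, hd']) s (by
        ext <;> simp [← heq])
    have h1 := congrArg Prod.fst (congrFun this 0)
    simp only [h0] at h1
    rw [← h1, clp_eq hr0] at hd'
    linarith
  have hp1 : ∀ s ∈ Ioo 0 T, (γ s).2.2 < π := by
    intro s hs
    refine lt_of_le_of_ne (hp s (Ioo_subset_Icc_self hs)).2 (fun heq => ?_)
    have hmax : IsLocalMax (fun t => (γ t).2.2) s := by
      filter_upwards [hn s hs] with t ht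
      rw [heq]; exact (hp t ht).2
    have hd := hmax.hasDerivAt_eq_zero (VF_comp (hγ s)).2.2
    rw [heq] at hd
    have hd' : -hh k (clp ρ M (γ s).1) + μ = 0 := by simpa [pdot] using hd
    have := sol_unique hK hγ (g := fun t => ((γ s).1, (γ s).2.1 + -((t - s) / clp ρ M (γ s).1), π))
      (fun t => by
        have e1 := hasDerivAt_const t (γ s).1
        have e2 := (((hasDerivAt_id t).sub_const s).div_const
          (clp ρ M (γ s).1)).neg.const_add (γ s).2.1
        have e3 := hasDerivAt_const t (π : ℝ)
        refine (e1.prodMk (e2.prodMk e3)).congr_deriv ?_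
        simp [VF, pdot, hd', neg_div]) s (by
        ext <;> simp [heq])
    have h1 := congrArg (fun z => z.2.2) (congrFun this 0)
    simp only [h0] at h1
    linarith
  refine good_of_clamped hρ hκ h0 hT hγ hr (fun t ht => (hu t ht).2) ?_ huT hp0 hp1
  intro s hs
  refine lt_of_le_of_ne (hu s (Ioo_subset_Icc_self hs)).1 (fun heq => ?_)
  have hmin : IsLocalMin (fun t => (γ t).2.1) s := by
    filter_upwards [hn s hs] with t ht
    rw [← heq]; exact (hu t ht).1
  have hd := hmin.hasDerivAt_eq_zero (VF_comp (hγ s)).2.1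
  have hcos : cos (γ s).2.2 = 0 := by
    rcases div_eq_zero_iff.1 hd with h | h
    · exact h
    · exact absurd h (hne _)
  have hps : (γ s).2.2 = π / 2 := by
    have h1 := hp0 s hs
    have h2 := hp1 s hs
    apply injOn_cos ⟨h1.le, h2.le⟩ ⟨by linarith, by linarith⟩
    rw [hcos, cos_pi_div_two]
  have hdp := (VF_comp (hγ s)).2.2
  rw [← heq, hps] at hdp
  have hclp : clp (-κ) κ 0 = 0 := clp_eq ⟨by linarith, hκ0.le⟩
  have hdp' : HasDerivAt (fun s => (γ s).2.2) μ s := hdp.congr_deriv (by simp [pdot, hclp])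
  have hev := pos_deriv_left hdp' hμ
  obtain ⟨a, ha, hI⟩ := (mem_nhdsLT_iff_exists_Ioo_subset' hs.1).1 
    (inter_mem hev (Ioo_mem_nhdsLT hs.1))
  have ha' : a < s := ha
  have hb1 : a < (a + s) / 2 := by linarith
  have hb2 : (a + s) / 2 < s := by linarith
  have := mono_lt (f := fun t => (γ t).2.1) hb2 (fun t _ => (VF_comp (hγ t)).2.1) (by
    intro t ht
    obtain ⟨h1, h2⟩ := hI ⟨hb1.trans ht.1, ht.2⟩
    have h1' : (γ t).2.2 < (γ s).2.2 := h1
    have h3 := hp0 t ⟨h2.1, h2.2.trans hs.2⟩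
    rw [hps] at h1'
    exact div_pos (cos_pos_of_mem_Ioo ⟨by linarith, h1'⟩) (hρ.trans_le (clp_ge _ _ _)))
  have h2 := (hI (show (a + s) / 2 ∈ Ioo a s from ⟨hb1, hb2⟩)).2
  have h3 := (hu _ ⟨h2.1.le, h2.2.le.trans hs.2.le⟩).1
  simp only [← heq] at this
  linarith

end LamCurve

namespace LamCurve

open Set Filter Topology
open scoped NNReal

/-- The set of weakly good data is compact. -/
theorem weak_compact {Φ : ℝ → ℝ → ℝ × ℝ × ℝ} (hΦ : Continuous (fun z : ℝ × ℝ => Φ z.1 z.2))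
    (ra L t0 t1 ρ M κ : ℝ) :
    IsCompact {z : ℝ × ℝ | z ∈ Icc ra L ×ˢ Icc t0 t1 ∧ (Φ z.1 z.2).2.1 = 0 ∧
      ∀ s ∈ Icc (0 : ℝ) 1, Φ z.1 (s * z.2) ∈ Icc ρ M ×ˢ (Icc 0 κ ×ˢ Icc 0 π)} := by
  refine (isCompact_Icc.prod isCompact_Icc).of_isClosed_subset ?_ (fun z hz => hz.1)
  refine IsClosed.inter (isClosed_Icc.prod isClosed_Icc) (IsClosed.inter ?_ ?_)
  · exact isClosed_eq (by fun_prop) continuous_const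
  · have : {z : ℝ × ℝ | ∀ s ∈ Icc (0 : ℝ) 1, Φ z.1 (s * z.2) ∈ Icc ρ M ×ˢ (Icc 0 κ ×ˢ Icc 0 π)}
        = ⋂ s ∈ Icc (0 : ℝ) 1, {z | Φ z.1 (s * z.2) ∈ Icc ρ M ×ˢ (Icc 0 κ ×ˢ Icc 0 π)} := by
      ext z; simp
    change IsClosed {z : ℝ × ℝ | ∀ s ∈ Icc (0 : ℝ) 1, Φ z.1 (s * z.2) ∈ Icc ρ M ×ˢ (Icc 0 κ ×ˢ Icc 0 π)}
    rw [this]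
    refine isClosed_biInter fun s _ => ?_
    have hc : Continuous (fun z : ℝ × ℝ => Φ z.1 (s * z.2)) :=
      hΦ.comp (f := fun z : ℝ × ℝ => (z.1, s * z.2)) (by fun_prop)
    exact (isClosed_Icc.prod (isClosed_Icc.prod isClosed_Icc)).preimage hc

/-- Openness. -/
theorem good_open {k : ℕ} {μ ρ M κ r0 T : ℝ} {K : ℝ≥0} (hμ : 0 < μ)
    (hK : LipschitzWith K (VF k μ ρ M κ)) (hρ : 0 < ρ) (hκ0 : 0 < κ) (hκ : κ < π / 4)
    {Φ : ℝ → ℝ → ℝ × ℝ × ℝ} (hΦc : Continuous (fun z : ℝ × ℝ => Φ z.1 z.2))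
    (h0 : ∀ r0, Φ r0 0 = (r0, 0, 0))
    (hΦ : ∀ r0 t, HasDerivAt (Φ r0) (VF k μ ρ M κ (Φ r0 t)) t)
    (hr0 : r0 ∈ Ioo ρ M) (hh0 : 0 < hh k r0 + μ)
    (G : Good k μ r0 T (fun t => (Φ r0 t).1) (fun t => (Φ r0 t).2.1) (fun t => (Φ r0 t).2.2))
    (hb : ∀ t ∈ Icc 0 T, (Φ r0 t).1 ∈ Ioo ρ M ∧ (Φ r0 t).2.1 < κ)
    (hpT : (Φ r0 T).2.2 < π) :
    ∀ᶠ a in 𝓝 r0, ∃ T r u p, Good k μ a T r u p := by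
  have hpi := pi_pos
  have hTpos := G.Tpos
  have hVc : Continuous (fun z : ℝ × ℝ => VF k μ ρ M κ (Φ z.1 z.2)) := hK.continuous.comp hΦc
  have hclpos : ∀ x, 0 < clp ρ M x := fun x => hρ.trans_le (clp_ge _ _ _)
  have hc1 : Continuous (fun z : ℝ × ℝ => (Φ z.1 z.2).2.1) := by fun_prop
  have hc2 : Continuous (fun z : ℝ × ℝ => (Φ z.1 z.2).2.2) := by fun_prop
  have hc3 : Continuous (fun z : ℝ × ℝ => (VF k μ ρ M κ (Φ z.1 z.2)).2.1) :=
    continuous_fst.comp (continuous_snd.comp hVc)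
  have hc4 : Continuous (fun z : ℝ × ℝ => (VF k μ ρ M κ (Φ z.1 z.2)).2.2) :=
    continuous_snd.comp (continuous_snd.comp hVc)
  -- open conditions
  have hO1 : IsOpen {z : ℝ × ℝ | (Φ z.1 z.2).1 ∈ Ioo ρ M ∧ (Φ z.1 z.2).2.1 < κ ∧
      (Φ z.1 z.2).2.2 < π} := by
    refine IsOpen.inter (isOpen_Ioo.preimage (by fun_prop)) (IsOpen.inter
      (isOpen_lt hc1 continuous_const) (isOpen_lt hc2 continuous_const))
  have hO2 : IsOpen {z : ℝ × ℝ | 0 < (Φ z.1 z.2).2.2} := isOpen_lt continuous_const (by fun_prop)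
  have hO3 : IsOpen {z : ℝ × ℝ | 0 < (Φ z.1 z.2).2.1} := isOpen_lt continuous_const (by fun_prop)
  have hO4 : IsOpen {z : ℝ × ℝ | 0 < (VF k μ ρ M κ (Φ z.1 z.2)).2.1} :=
    isOpen_lt continuous_const hc3
  have hO5 : IsOpen {z : ℝ × ℝ | 0 < (VF k μ ρ M κ (Φ z.1 z.2)).2.2} :=
    isOpen_lt continuous_const hc4
  have hO6 : IsOpen {z : ℝ × ℝ | (VF k μ ρ M κ (Φ z.1 z.2)).2.1 < 0} :=
    isOpen_lt hc3 continuous_const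
  have hO7 : IsOpen {z : ℝ × ℝ | (Φ z.1 z.2).2.1 < 0} := isOpen_lt (by fun_prop) continuous_const
  have hA : ∀ t ∈ Icc 0 T, (Φ r0 t).1 ∈ Ioo ρ M ∧ (Φ r0 t).2.1 < κ ∧ (Φ r0 t).2.2 < π := by
    intro t ht
    refine ⟨(hb t ht).1, (hb t ht).2, ?_⟩
    rcases ht.1.eq_or_lt with h | h
    · rw [← h, h0]; exact hpi
    rcases ht.2.eq_or_lt with h' | h'
    · rw [h']; exact hpT
    · exact G.phi t ⟨h, h'⟩
  have hpT2 : π / 2 < (Φ r0 T).2.2 := by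
    obtain ⟨m, hm, -, -, h⟩ := G.turn hμ
    exact h T ⟨hm.2, le_rfl⟩
  -- near time zero
  have ev0 : ∀ᶠ z : ℝ × ℝ in 𝓝 (r0, 0), ((Φ z.1 z.2).1 ∈ Ioo ρ M ∧ (Φ z.1 z.2).2.1 < κ ∧
      (Φ z.1 z.2).2.2 < π) ∧ 0 < (VF k μ ρ M κ (Φ z.1 z.2)).2.1 ∧
      0 < (VF k μ ρ M κ (Φ z.1 z.2)).2.2 := by
    refine (hO1.eventually_mem (x := (r0, 0)) (hA 0 ⟨le_rfl, hTpos.le⟩)).and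
      ((hO4.eventually_mem (x := (r0, 0)) ?_).and (hO5.eventually_mem (x := (r0, 0)) ?_))
    · simp only [mem_ofPred_eq, h0, VF, cos_zero]
      have := hclpos r0
      positivity
    · simp only [mem_ofPred_eq, h0, VF, pdot, cos_zero, sin_zero]
      rw [clp_eq (Ioo_subset_Icc_self hr0)]
      linarith
  -- near the return time
  have ev1 : ∀ᶠ z : ℝ × ℝ in 𝓝 (r0, T), ((Φ z.1 z.2).1 ∈ Ioo ρ M ∧ (Φ z.1 z.2).2.1 < κ ∧
      (Φ z.1 z.2).2.2 < π) ∧ (VF k μ ρ M κ (Φ z.1 z.2)).2.1 < 0 ∧ 0 < (Φ z.1 z.2).2.2 := by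
    refine (hO1.eventually_mem (x := (r0, T)) (hA T ⟨hTpos.le, le_rfl⟩)).and
      ((hO6.eventually_mem (x := (r0, T)) ?_).and (hO2.eventually_mem (x := (r0, T)) ?_))
    · simp only [mem_ofPred_eq, VF]
      exact div_neg_of_neg_of_pos (cos_neg_of_pi_div_two_lt_of_lt hpT2 (by linarith)) (hclpos _)
    · simp only [mem_ofPred_eq]
      linarith
  obtain ⟨ε0, hε0, H0⟩ := Metric.eventually_nhds_iff.1 ev0
  obtain ⟨ε1, hε1, H1⟩ := Metric.eventually_nhds_iff.1 ev1
  set τ := min (ε0 / 2) (min (ε1 / 2) (T / 3)) with hτ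
  have hτ0 : 0 < τ := by positivity
  have hτ1 : τ < ε0 := by
    have : τ ≤ ε0 / 2 := min_le_left _ _
    linarith
  have hτ2 : τ < ε1 := by
    have : τ ≤ ε1 / 2 := (min_le_right _ _).trans (min_le_left _ _)
    linarith
  have hτ3 : τ ≤ T / 3 := (min_le_right _ _).trans (min_le_right _ _)
  clear_value τ
  have B0 : ∀ a, |a - r0| < τ → ∀ t ∈ Icc 0 τ, _ := fun a ha t ht => H0 (y := (a, t)) (by
    rw [Prod.dist_eq, Real.dist_eq, Real.dist_eq]
    refine max_lt (ha.trans hτ1) ?_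
    simp only [sub_zero]
    rw [abs_of_nonneg ht.1]; exact ht.2.trans_lt hτ1)
  have B1 : ∀ a, |a - r0| < τ → ∀ t ∈ Icc (T - τ) (T + τ), _ :=
    fun a ha t ht => H1 (y := (a, t)) (by
    rw [Prod.dist_eq, Real.dist_eq, Real.dist_eq]
    refine max_lt (ha.trans hτ2) ?_
    rw [abs_lt]
    have := ht.1
    have := ht.2
    constructor <;> linarith)
  -- middle
  have evm : ∀ᶠ a in 𝓝 r0, ∀ t ∈ Icc τ (T - τ), ((Φ a t).1 ∈ Ioo ρ M ∧ (Φ a t).2.1 < κ ∧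
      (Φ a t).2.2 < π) ∧ 0 < (Φ a t).2.2 ∧ 0 < (Φ a t).2.1 := by
    refine isCompact_Icc.eventually_forall_of_forall_eventually
      (P := fun a t => ((Φ a t).1 ∈ Ioo ρ M ∧ (Φ a t).2.1 < κ ∧
      (Φ a t).2.2 < π) ∧ 0 < (Φ a t).2.2 ∧ 0 < (Φ a t).2.1) ?_
    intro t ht
    have htI : t ∈ Ioo 0 T := ⟨by linarith [ht.1], by linarith [ht.2]⟩
    exact (hO1.eventually_mem (x := (r0, t)) (hA t (Ioo_subset_Icc_self htI))).and
      ((hO2.eventually_mem (x := (r0, t)) (G.ppos t htI)).and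
        (hO3.eventually_mem (x := (r0, t)) (G.upos t htI)))
  have eve : ∀ᶠ a in 𝓝 r0, (Φ a (T + τ)).2.1 < 0 := by
    have h1 : (Φ r0 (T + τ)).2.1 < 0 := by
      have := mono_lt (f := fun t => -(Φ r0 t).2.1) (by linarith : T < T + τ)
        (fun t _ => (VF_comp (hΦ r0 t)).2.1.neg) (by
          intro t ht
          have := (B1 r0 (by simpa using hτ0) t ⟨by linarith [ht.1], ht.2.le⟩).2.1
          exact neg_pos.2 this)
      have h2 := G.u_T
      linarith
    have hc : Continuous fun a : ℝ => (Φ a (T + τ)).2.1 := by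
      have : Continuous fun a : ℝ => Φ a (T + τ) :=
        hΦc.comp (f := fun a : ℝ => (a, T + τ)) (by fun_prop)
      fun_prop
    exact (isOpen_lt hc continuous_const).mem_nhds h1
  filter_upwards [evm, eve, Metric.ball_mem_nhds r0 hτ0] with a hm he ha
  rw [Metric.mem_ball, Real.dist_eq] at ha
  have hu1 : ∀ t ∈ Ioc 0 τ, 0 < (Φ a t).2.1 := by
    intro t ht
    have := mono_lt (f := fun t => (Φ a t).2.1) ht.1 (fun t _ => (VF_comp (hΦ a t)).2.1)
      (fun s hs => (B0 a ha s ⟨hs.1.le, hs.2.le.trans ht.2⟩).2.1)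
    simpa [h0] using this
  have hp1 : ∀ t ∈ Ioc 0 τ, 0 < (Φ a t).2.2 := by
    intro t ht
    have := mono_lt (f := fun t => (Φ a t).2.2) ht.1 (fun t _ => (VF_comp (hΦ a t)).2.2)
      (fun s hs => (B0 a ha s ⟨hs.1.le, hs.2.le.trans ht.2⟩).2.2)
    simpa [h0] using this
  obtain ⟨T', hT', hT'0, hT'pos⟩ := first_zero (f := fun t => (Φ a t).2.1) (s := T - τ)
    (e := T + τ) (by linarith)
    (fun t _ => (VF_comp (hΦ a t)).2.1.continuousAt.continuousWithinAt)
    (hm (T - τ) ⟨by linarith, le_rfl⟩).2.2 he.le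
  have hall : ∀ t ∈ Icc 0 T', (Φ a t).1 ∈ Ioo ρ M ∧ (Φ a t).2.1 < κ ∧ (Φ a t).2.2 < π := by
    intro t ht
    rcases le_total t τ with h | h
    · exact (B0 a ha t ⟨ht.1, h⟩).1
    rcases le_total t (T - τ) with h' | h'
    · exact (hm t ⟨h, h'⟩).1
    · exact (B1 a ha t ⟨h', ht.2.trans hT'.2⟩).1
  refine ⟨T', _, _, _, good_of_clamped hρ hκ (h0 a) (by linarith [hT'.1]) (hΦ a)
    (fun t ht => Ioo_subset_Icc_self (hall t ht).1) (fun t ht => (hall t ht).2.1.le) ?_ hT'0 ?_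
    (fun t ht => (hall t (Ioo_subset_Icc_self ht)).2.2)⟩
  · intro t ht
    rcases le_total t τ with h | h
    · exact hu1 t ⟨ht.1, h⟩
    rcases le_total t (T - τ) with h' | h'
    · exact (hm t ⟨h, h'⟩).2.2
    · exact hT'pos t ⟨h', ht.2⟩
  · intro t ht
    rcases le_total t τ with h | h
    · exact hp1 t ⟨ht.1, h⟩
    rcases le_total t (T - τ) with h' | h'
    · exact (hm t ⟨h, h'⟩).2.1
    · exact (B1 a ha t ⟨h', ht.2.le.trans hT'.2⟩).2.2

/-- There is a good arc returning orthogonally to the diagonal. -/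
theorem exists_closing (k : ℕ) {μ : ℝ} (hμ : 0 < μ) :
    ∃ r0 T r u p, Good k μ r0 T r u p ∧ p T = π := by
  by_contra hcon
  push Not at hcon
  obtain ⟨ra, hra, hhra, hno⟩ := exists_ra k hμ
  obtain ⟨L, hL, hGL⟩ := exists_large k hμ ra
  obtain ⟨ρ, M, κ, t0, hρ, hρra, hLM, hκ0, hκ, ht0, hunif⟩ := unif k hμ hra hL
  obtain ⟨K, C, hK, hC⟩ := VF_lip k μ hρ (by linarith : ρ ≤ M) hκ0.le hκ
  obtain ⟨Φ, h0, hΦ, hΦc⟩ := exists_flow hK hC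
  have hcomp := weak_compact hΦc ra L t0 (π / μ) ρ M κ
  set Z := {z : ℝ × ℝ | z ∈ Icc ra L ×ˢ Icc t0 (π / μ) ∧ (Φ z.1 z.2).2.1 = 0 ∧
      ∀ s ∈ Icc (0 : ℝ) 1, Φ z.1 (s * z.2) ∈ Icc ρ M ×ˢ (Icc 0 κ ×ˢ Icc 0 π)} with hZ
  have hpos : ∀ a ∈ Icc ra L, 0 < hh k a + μ := by
    intro a ha
    have := hh_mono (k := k) hra ha.1
    linarith
  have hto : ∀ a ∈ Icc ra L, (∃ T r u p, Good k μ a T r u p) → a ∈ Prod.fst '' Z := by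
    rintro a ha ⟨T, r, u, p, G⟩
    obtain ⟨hT, hb⟩ := hunif a ha T r u p G
    obtain ⟨heq, -⟩ := good_flow hK hρ hκ G (h0 a) (hΦ a) hb
    refine ⟨(a, T), ⟨⟨ha, hT, G.T_le hμ⟩, ?_, ?_⟩, rfl⟩
    · simp only
      rw [heq T ⟨G.Tpos.le, le_rfl⟩]; exact G.u_T
    · intro s hs
      have hsT : s * T ∈ Icc 0 T :=
        ⟨mul_nonneg hs.1 G.Tpos.le, mul_le_of_le_one_left G.Tpos.le hs.2⟩
      simp only
      rw [heq _ hsT]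
      exact ⟨Ioo_subset_Icc_self (hb _ hsT).1, ⟨G.u_nonneg _ hsT, (hb _ hsT).2.le⟩, G.p_mem _ hsT⟩
  have hne : (Prod.fst '' Z).Nonempty := ⟨L, hto L ⟨hL, le_rfl⟩ hGL⟩
  obtain ⟨m, hm, hmin⟩ := (hcomp.image continuous_fst).exists_isLeast hne
  obtain ⟨⟨m', T⟩, ⟨⟨hmI, hTI⟩, huT, hall⟩, hmm⟩ := hm
  simp only at hmm hmI hTI huT hall
  subst hmm
  have hTpos : 0 < T := ht0.trans_le hTI.1
  have hall' : ∀ t ∈ Icc 0 T, Φ m' t ∈ Icc ρ M ×ˢ (Icc 0 κ ×ˢ Icc 0 π) := by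
    intro t ht
    have := hall (t / T) ⟨div_nonneg ht.1 hTpos.le, (div_le_one hTpos).2 ht.2⟩
    rwa [div_mul_cancel₀ _ hTpos.ne'] at this
  have G := good_of_weak hμ hK hρ hκ0 hκ ⟨by linarith [hmI.1], by linarith [hmI.2]⟩
    (hpos m' hmI) hTpos (h0 m') (hΦ m') huT (fun t ht => (hall' t ht).1)
    (fun t ht => (hall' t ht).2.1) (fun t ht => (hall' t ht).2.2)
  have hlt : ra < m' := by
    refine lt_of_le_of_ne hmI.1 (fun h => ?_)
    rw [← h] at G
    exact hno _ _ _ _ G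
  have hpT : (Φ m' T).2.2 < π := by
    refine lt_of_le_of_ne (hall' T ⟨hTpos.le, le_rfl⟩).2.2.2 (hcon _ _ _ _ _ G)
  have hev := good_open hμ hK hρ hκ0 hκ hΦc h0 hΦ ⟨by linarith, by linarith [hmI.2]⟩
    (hpos m' hmI) G (hunif m' hmI _ _ _ _ G).2 hpT
  have hev2 : ∀ᶠ a in 𝓝[<] m', ∃ T r u p, Good k μ a T r u p := hev.filter_mono nhdsWithin_le_nhds
  obtain ⟨a, ha, hal⟩ := (hev2.and (Ioo_mem_nhdsLT hlt)).exists
  have := hmin (hto a ⟨hal.1.le, hal.2.le.trans hmI.2⟩ ha)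
  linarith [hal.2]

end LamCurve

namespace LamCurve

open Set Filter Topology
open scoped NNReal

theorem theta_alg {r C S c s a μ : ℝ} (hr : r ≠ 0) (hC : C ≠ 0) (hS : S ≠ 0)
    (h : C ^ 2 + S ^ 2 = 1) :
    -(c / r) - (c * (r / 2 - (2 * a + 1) / r) + μ
        + 2 * a / r * ((C ^ 2 - S ^ 2) / (2 * S * C)) * s) =
    (r * C / 2 - a / (r * C)) * (-(C * c + S * s)) + (a / (r * S) - r * S / 2) * (S * c - C * s)
      + -μ := by
  rw [← sub_eq_zero]
  have : -(c / r) - (c * (r / 2 - (2 * a + 1) / r) + μ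
        + 2 * a / r * ((C ^ 2 - S ^ 2) / (2 * S * C)) * s) -
    ((r * C / 2 - a / (r * C)) * (-(C * c + S * s)) + (a / (r * S) - r * S / 2) * (S * c - C * s)
      + -μ) = r * c / 2 * (C ^ 2 + S ^ 2 - 1) := by
    field_simp
    ring
  rw [this, h]; ring

theorem main_aux (k : ℕ) {μ : ℝ} (hμ : 0 < μ) :
    ∃ (P : ℝ) (x y θ : ℝ → ℝ), 0 < P ∧
      (∀ t : ℝ, 0 < x t ∧ 0 < y t) ∧
      (∀ t : ℝ, HasDerivAt x (Real.cos (θ t)) t) ∧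
      (∀ t : ℝ, HasDerivAt y (Real.sin (θ t)) t) ∧
      (∀ t : ℝ, HasDerivAt θ
        ((x t / 2 - ((k : ℝ) + 1) / x t) * Real.sin (θ t) +
          (((k : ℝ) + 1) / y t - y t / 2) * Real.cos (θ t) + -μ) t) ∧
      Function.Periodic x P ∧
      Function.Periodic y P ∧
      (∃ k : ℤ, ∀ t : ℝ, θ (t + P) = θ t + 2 * π * k) ∧
      Set.InjOn (fun t => (x t, y t)) (Set.Ico 0 P) ∧
      (∃ t₁ t₂ : ℝ, (x t₁) ^ 2 + (y t₁) ^ 2 ≠ (x t₂) ^ 2 + (y t₂) ^ 2) ∧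
      (∀ t : ℝ, x (-t) = y t ∧ y (-t) = x t) := by
  obtain ⟨r0, T, r1, u1, p1, G1, hpT1⟩ := exists_closing k hμ
  have hpi := pi_pos
  have hr0 : 0 < r0 := by
    have := G1.rpos 0 ⟨le_rfl, G1.Tpos.le⟩
    rwa [G1.r_zero] at this
  obtain ⟨ρ, M, κ, t0, hρ, hρr, hrM, hκ0, hκ, -, hunif⟩ := unif k hμ hr0 le_rfl
  obtain ⟨-, hb1⟩ := hunif r0 ⟨le_rfl, le_rfl⟩ T r1 u1 p1 G1
  obtain ⟨K, C, hK, hC⟩ := VF_lip k μ hρ (by linarith : ρ ≤ M) hκ0.le hκ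
  obtain ⟨γ, h0, hγ⟩ := exists_global_sol _ K C hK hC (r0, 0, 0)
  obtain ⟨heq, G⟩ := good_flow hK hρ hκ G1 h0 hγ hb1
  have hTpos := G.Tpos
  have hpT : (γ T).2.2 = π := by rw [heq T ⟨hTpos.le, le_rfl⟩]; exact hpT1
  have huT : (γ T).2.1 = 0 := G.u_T
  have hbT : ∀ t ∈ Icc 0 T, (γ t).1 ∈ Ioo ρ M ∧ (γ t).2.1 ∈ Ioo (-κ) κ := by
    intro t ht
    have h1 := G.u_nonneg t ht
    have h2 := hb1 t ht
    rw [heq t ht] at h1 ⊢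
    exact ⟨h2.1, by simp only at h1 ⊢; exact ⟨by linarith, h2.2⟩⟩
  clear hb1 heq hpT1 G1 hunif
  -- reflection at time zero
  have hs1 : (fun t => ((γ (-t)).1, -(γ (-t)).2.1, -(γ (-t)).2.2)) = γ := by
    refine sol_unique hK (fun t => ?_) hγ 0 (by simp [h0])
    obtain ⟨d1, d2, d3⟩ := VF_comp (hγ (-t))
    have e1 := d1.comp t (hasDerivAt_neg t)
    have e2 := (d2.comp t (hasDerivAt_neg t)).neg
    have e3 := (d3.comp t (hasDerivAt_neg t)).neg
    refine (e1.prodMk (e2.prodMk e3)).congr_deriv ?_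
    simp only [VF, pdot, clp_neg κ _ hκ0.le, mul_neg, tan_neg, sin_neg, cos_neg]
    ext <;> simp <;> ring
  have hs2 : (fun t => ((γ (2 * T - t)).1, -(γ (2 * T - t)).2.1, 2 * π - (γ (2 * T - t)).2.2)) = γ := by
    refine sol_unique hK (fun t => ?_) hγ T ?_
    · obtain ⟨d1, d2, d3⟩ := VF_comp (hγ (2 * T - t))
      have hd := (hasDerivAt_id t).const_sub (2 * T)
      have e1 := d1.comp t hd
      have e2 := (d2.comp t hd).neg
      have e3 := (d3.comp t hd).const_sub (2 * π)
      refine (e1.prodMk (e2.prodMk e3)).congr_deriv ?_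
      simp only [VF, pdot, clp_neg κ _ hκ0.le, mul_neg, tan_neg, sin_two_pi_sub, cos_two_pi_sub, id]
      ext <;> simp
    · rw [(by ring : 2 * T - T = T)]
      ext
      · rfl
      · simp [huT]
      · simp only [hpT]; ring
  have a1 : ∀ t, (γ (-t)).1 = (γ t).1 := fun t => congrArg (fun z => z.1) (congrFun hs1 t)
  have a2 : ∀ t, (γ (-t)).2.1 = -(γ t).2.1 := fun t => by
    have := congrArg (fun z => z.2.1) (congrFun hs1 t)
    simp only at this; linarith
  have a3 : ∀ t, (γ (-t)).2.2 = -(γ t).2.2 := fun t => by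
    have := congrArg (fun z => z.2.2) (congrFun hs1 t)
    simp only at this; linarith
  have b1 : ∀ t, (γ (2 * T - t)).1 = (γ t).1 := fun t => congrArg (fun z => z.1) (congrFun hs2 t)
  have b2 : ∀ t, (γ (2 * T - t)).2.1 = -(γ t).2.1 := fun t => by
    have := congrArg (fun z => z.2.1) (congrFun hs2 t)
    simp only at this; linarith
  have b3 : ∀ t, (γ (2 * T - t)).2.2 = 2 * π - (γ t).2.2 := fun t => by
    have := congrArg (fun z => z.2.2) (congrFun hs2 t)
    simp only at this; linarith
  have c1 : ∀ t, (γ (t + 2 * T)).1 = (γ t).1 := fun t => by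
    rw [(by ring : t + 2 * T = 2 * T - -t), b1, a1]
  have c2 : ∀ t, (γ (t + 2 * T)).2.1 = (γ t).2.1 := fun t => by
    rw [(by ring : t + 2 * T = 2 * T - -t), b2, a2, neg_neg]
  have c3 : ∀ t, (γ (t + 2 * T)).2.2 = (γ t).2.2 + 2 * π := fun t => by
    rw [(by ring : t + 2 * T = 2 * T - -t), b3, a3]; ring
  have hball : ∀ t, (γ t).1 ∈ Ioo ρ M ∧ (γ t).2.1 ∈ Ioo (-κ) κ := by
    intro t
    have hper : Function.Periodic (fun t => ((γ t).1, (γ t).2.1)) (2 * T) := fun t => by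
      simp only [c1, c2]
    obtain ⟨s, hs, hst⟩ := hper.exists_mem_Ico₀ (by linarith) t
    have e1 : (γ t).1 = (γ s).1 := (Prod.mk.inj hst).1
    have e2 : (γ t).2.1 = (γ s).2.1 := (Prod.mk.inj hst).2
    rw [e1, e2]
    rcases le_total s T with h | h
    · exact hbT s ⟨hs.1, h⟩
    · obtain ⟨h1, h2⟩ := hbT (2 * T - s) ⟨by linarith [hs.2], by linarith⟩
      rw [b1] at h1
      rw [b2] at h2
      exact ⟨h1, by constructor <;> linarith [h2.1, h2.2]⟩
  have hrpos : ∀ t, 0 < (γ t).1 := fun t => hρ.trans (hball t).1.1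
  have hder : ∀ t, HasDerivAt (fun s => (γ s).1) (-sin (γ t).2.2) t ∧
      HasDerivAt (fun s => (γ s).2.1) (cos (γ t).2.2 / (γ t).1) t ∧
      HasDerivAt (fun s => (γ s).2.2) (pdot k μ (γ t).1 (γ t).2.1 (γ t).2.2) t := by
    intro t
    have := VF_comp (hγ t)
    rwa [clp_eq (Ioo_subset_Icc_self (hball t).1), clp_eq (Ioo_subset_Icc_self (hball t).2)] at this
  have hα : ∀ t, 0 < π / 4 - (γ t).2.1 ∧ π / 4 - (γ t).2.1 < π / 2 := by
    intro t
    have := (hball t).2.1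
    have := (hball t).2.2
    constructor <;> linarith
  have hcos : ∀ t, 0 < cos (π / 4 - (γ t).2.1) := fun t =>
    cos_pos_of_mem_Ioo ⟨by linarith [(hα t).1], (hα t).2⟩
  have hsin : ∀ t, 0 < sin (π / 4 - (γ t).2.1) := fun t =>
    sin_pos_of_pos_of_lt_pi (hα t).1 (by linarith [(hα t).2])
  have hsq : ∀ t, ((γ t).1 * cos (π / 4 - (γ t).2.1)) ^ 2 +
      ((γ t).1 * sin (π / 4 - (γ t).2.1)) ^ 2 = (γ t).1 ^ 2 := by
    intro t
    have := cos_sq_add_sin_sq (π / 4 - (γ t).2.1)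
    linear_combination (γ t).1 ^ 2 * this
  have hdα : ∀ t, HasDerivAt (fun s => π / 4 - (γ s).2.1) (-(cos (γ t).2.2 / (γ t).1)) t :=
    fun t => (hder t).2.1.const_sub _
  have hθ : ∀ t, π / 4 - (γ t).2.1 - π / 2 - (γ t).2.2 =
      (π / 4 - (γ t).2.1 - (γ t).2.2) - π / 2 := fun t => by ring
  refine ⟨2 * T, fun t => (γ t).1 * cos (π / 4 - (γ t).2.1),
    fun t => (γ t).1 * sin (π / 4 - (γ t).2.1),
    fun t => π / 4 - (γ t).2.1 - π / 2 - (γ t).2.2, by linarith,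
    fun t => ⟨mul_pos (hrpos t) (hcos t), mul_pos (hrpos t) (hsin t)⟩, ?_, ?_, ?_, ?_, ?_,
    ⟨-1, ?_⟩, ?_, ?_, ?_⟩
  · intro t
    have := (hder t).1.mul ((hdα t).cos)
    refine this.congr_deriv ?_
    simp only
    rw [hθ, cos_sub_pi_div_two, sin_sub (π / 4 - (γ t).2.1)]
    have := (hrpos t).ne'
    field_simp
    ring
  · intro t
    have := (hder t).1.mul ((hdα t).sin)
    refine this.congr_deriv ?_
    simp only
    rw [hθ, sin_sub_pi_div_two, cos_sub (π / 4 - (γ t).2.1)]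
    have := (hrpos t).ne'
    field_simp
    ring
  · intro t
    have := ((hdα t).sub_const (π / 2)).sub (hder t).2.2
    refine this.congr_deriv ?_
    simp only
    rw [hθ, cos_sub_pi_div_two, sin_sub_pi_div_two, cos_sub (π / 4 - (γ t).2.1),
      sin_sub (π / 4 - (γ t).2.1)]
    have ht : tan (2 * (γ t).2.1) = (cos (π / 4 - (γ t).2.1) ^ 2 - sin (π / 4 - (γ t).2.1) ^ 2) /
        (2 * sin (π / 4 - (γ t).2.1) * cos (π / 4 - (γ t).2.1)) := by
      rw [← cos_two_mul', ← sin_two_mul, tan_eq_sin_div_cos,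
        (by ring : 2 * (π / 4 - (γ t).2.1) = π / 2 - 2 * (γ t).2.1), cos_pi_div_two_sub,
        sin_pi_div_two_sub]
    rw [pdot, hh, ht]
    exact theta_alg (hrpos t).ne' (hcos t).ne' (hsin t).ne' (cos_sq_add_sin_sq _)
  · intro t; simp only [c1, c2]
  · intro t; simp only [c1, c2]
  · intro t; simp only [c2, c3]; push_cast; ring
  · -- injectivity
    have hinj : ∀ t1 t2, ((γ t1).1 * cos (π / 4 - (γ t1).2.1), (γ t1).1 * sin (π / 4 - (γ t1).2.1))
        = ((γ t2).1 * cos (π / 4 - (γ t2).2.1), (γ t2).1 * sin (π / 4 - (γ t2).2.1)) →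
        (γ t1).1 = (γ t2).1 ∧ (γ t1).2.1 = (γ t2).2.1 := by
      intro t1 t2 h
      have e1 := congrArg Prod.fst h
      have e2 := congrArg Prod.snd h
      simp only at e1 e2
      have e3 : (γ t1).1 = (γ t2).1 := by
        have h1 := hsq t1
        rw [e1, e2, hsq t2] at h1
        exact ((pow_left_inj₀ (hrpos t2).le (hrpos t1).le two_ne_zero).1 h1).symm
      refine ⟨e3, ?_⟩
      rw [e3] at e1
      have e4 := mul_left_cancel₀ (hrpos t2).ne' e1
      have := injOn_cos ⟨(hα t1).1.le, by linarith [(hα t1).2]⟩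
        ⟨(hα t2).1.le, by linarith [(hα t2).2]⟩ e4
      linarith
    have hrinj : ∀ t1 ∈ Icc 0 T, ∀ t2 ∈ Icc 0 T, (γ t1).1 = (γ t2).1 → t1 = t2 := by
      intro t1 h1 t2 h2 h
      rcases lt_trichotomy t1 t2 with hlt | he | hlt
      · exact absurd h (G.r_strict h1.1 hlt h2.2).ne'
      · exact he
      · exact absurd h (G.r_strict h2.1 hlt h1.2).ne
    have hmix : ∀ t1 t2, t1 ∈ Icc 0 T → t2 ∈ Ioo T (2 * T) → (γ t1).1 = (γ t2).1 →
        (γ t1).2.1 = (γ t2).2.1 → False := by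
      intro t1 t2 h1 h2 e1 e2
      rw [← b1 t2] at e1
      have h3 := hrinj t1 h1 (2 * T - t2) ⟨by linarith [h2.2], by linarith [h2.1]⟩ e1
      have h4 := b2 t2
      rw [← h3] at h4
      have h5 : 0 < (γ t1).2.1 := G.upos t1 ⟨by linarith [h2.2], by linarith [h2.1]⟩
      linarith
    intro t1 h1 t2 h2 h
    obtain ⟨e1, e2⟩ := hinj t1 t2 h
    rcases le_or_gt t1 T with g1 | g1 <;> rcases le_or_gt t2 T with g2 | g2
    · exact hrinj t1 ⟨h1.1, g1⟩ t2 ⟨h2.1, g2⟩ e1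
    · exact (hmix t1 t2 ⟨h1.1, g1⟩ ⟨g2, h2.2⟩ e1 e2).elim
    · exact (hmix t2 t1 ⟨h2.1, g2⟩ ⟨g1, h1.2⟩ e1.symm e2.symm).elim
    · rw [← b1 t1, ← b1 t2] at e1
      have := hrinj _ ⟨by linarith [h1.2], by linarith⟩ _ ⟨by linarith [h2.2], by linarith⟩ e1
      linarith
  · refine ⟨0, T, ?_⟩
    simp only [hsq]
    have h1 : (γ T).1 < (γ 0).1 := G.r_strict le_rfl hTpos le_rfl
    have h2 := hrpos T
    intro h
    nlinarith
  · intro t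
    simp only [a1, a2]
    have e1 : π / 4 - -(γ t).2.1 = π / 2 - (π / 4 - (γ t).2.1) := by ring
    rw [e1, cos_pi_div_two_sub, sin_pi_div_two_sub]
    exact ⟨rfl, rfl⟩

end LamCurve

/-- Main existence theorem: there is a periodic solution of the generating system with
`m = n` whose trace is a simple closed curve in the open first quadrant that is not the
circle solution and is symmetric across the diagonal `y = x`.  (The angle θ, being the
continuously varying inclination of a simple closed curve, is periodic modulo `2π`.)
This generating curve produces a closed, embedded λ-hypersurface in `ℝ^{2n}`
diffeomorphic to `S^{n−1} × S^{n−1} × S^1` with `O(n) × O(n)` symmetry. -/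
theorem exists_closed_generating_curve
    (lam : ℝ) (hlam : lam < 0) (n : ℕ) (hn : 2 ≤ n) :
    ∃ (P : ℝ) (x y θ : ℝ → ℝ), 0 < P ∧
      (∀ t : ℝ, 0 < x t ∧ 0 < y t) ∧
      (∀ t : ℝ, HasDerivAt x (Real.cos (θ t)) t) ∧
      (∀ t : ℝ, HasDerivAt y (Real.sin (θ t)) t) ∧
      (∀ t : ℝ, HasDerivAt θ
        ((x t / 2 - ((n : ℝ) - 1) / x t) * Real.sin (θ t) +
          (((n : ℝ) - 1) / y t - y t / 2) * Real.cos (θ t) + lam) t) ∧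
      Function.Periodic x P ∧
      Function.Periodic y P ∧
      (∃ k : ℤ, ∀ t : ℝ, θ (t + P) = θ t + 2 * π * k) ∧
      Set.InjOn (fun t => (x t, y t)) (Set.Ico 0 P) ∧
      (∃ t₁ t₂ : ℝ, (x t₁) ^ 2 + (y t₁) ^ 2 ≠ (x t₂) ^ 2 + (y t₂) ^ 2) ∧
      (∀ t : ℝ, x (-t) = y t ∧ y (-t) = x t) := by
  obtain ⟨k, rfl⟩ : ∃ k, n = k + 2 := ⟨n - 2, by omega⟩
  have h := LamCurve.main_aux k (μ := -lam) (by linarith)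
  have e : ((k + 2 : ℕ) : ℝ) - 1 = (k : ℝ) + 1 := by push_cast; ring
  rw [e]
  rw [neg_neg] at h
  exact h
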